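/- arXiv:1003.1688 — 5 statements merged into one kernel-verified Lean document; each statement's English description precedes it below -/
import Mathlib

section
/- Let S(λ,k,n) be a staircase with bad foundation and let T be a semistandard Young tableau of shape S(λ,k,n) whose reading word is lattice. Then the entries in the first row of the foundation λ/δ_{k−1} of T form a strictly increasing sequence of values taken from the set {2, 3, …, n+1} if k = 0, and from the set {1, 2, …, n+1} if k > 0. -/
/-!
The lattice condition forces the staircase part of `T` completely: the row of length `i + 1` must
read `1, 2, …, i + 1` (`staircase_entry`).  Consequently, when row `r ≤ n` is about to be read, each
value `v ≥ 1` has occurred exactly `r + 1 - v` times (`ncard_aboveRow`).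

Reading row `r` from right to left, the entries weakly decrease, so when a value `v ≥ 2` is read no
`v - 1` of that row has been read yet, and `v - 1` has still occurred `r + 2 - v` times.  Hence the
row contains no entry above `r + 1` (`row_le`), and no `v ≥ 2` twice (`row_strict`).  Applied to a
row of the staircase, together with column strictness this gives the induction step for
`staircase_entry`; applied to row `n` it gives the theorem, because all cells of row `n` in columns
`≥ k` lie under a cell of the staircase, hence have entries `≥ 2`, and row `n` has at most one
further cell, in column `k - 1` (present only for `k > 0`).
-/

/-- The cells of the rotated staircase `Δ_n`, realized as the skew diagram
`(n^n)/δ_{n-1}`, placed in rows `0,…,n-1` and columns `k,…,n+k-1`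
(each row right-justified; the row of length `i+1` is row `i`). -/
def staircaseCells (n k : ℕ) : Set (ℕ × ℕ) :=
  {p | p.1 < n ∧ k + n - 1 - p.1 ≤ p.2 ∧ p.2 < n + k}

/-- The cells of the foundation `λ/δ_{k-1}`, placed in rows `n, n+1, …`;
row `n + i` contains the cells of row `i` of `λ/δ_{k-1}`. -/
def foundationCells (lam : ℕ → ℕ) (k n : ℕ) : Set (ℕ × ℕ) :=
  {p | n ≤ p.1 ∧ k - 1 - (p.1 - n) ≤ p.2 ∧ p.2 < lam (p.1 - n)}

/-- The staircase with bad foundation `𝒮(λ,k,n)`: the foundation `λ/δ_{k-1}`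
is placed immediately below `Δ_n`, extending `k` columns to its left, so that
rows overlap in exactly `λ₁ - k` columns. -/
def SBF (lam : ℕ → ℕ) (k n : ℕ) : Set (ℕ × ℕ) :=
  staircaseCells n k ∪ foundationCells lam k n

/-- `T` is a semistandard Young tableau of shape `D`: positive entries on `D`,
zero outside `D`, rows weakly increasing, columns strictly increasing. -/
def IsSSYT (D : Set (ℕ × ℕ)) (T : ℕ × ℕ → ℕ) : Prop :=
  (∀ p ∈ D, 0 < T p) ∧ (∀ p, p ∉ D → T p = 0) ∧
  (∀ i j1 j2, j1 ≤ j2 → (i, j1) ∈ D → (i, j2) ∈ D → T (i, j1) ≤ T (i, j2)) ∧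
  (∀ i1 i2 j, i1 < i2 → (i1, j) ∈ D → (i2, j) ∈ D → T (i1, j) < T (i2, j))

/-- The set of cells of `D` read up to (and including) cell `q`, when rows are
read right to left, from the top row to the bottom row. -/
def readUpTo (D : Set (ℕ × ℕ)) (q : ℕ × ℕ) : Set (ℕ × ℕ) :=
  {p ∈ D | p.1 < q.1 ∨ (p.1 = q.1 ∧ q.2 ≤ p.2)}

/-- The reading word of `T` is lattice: at every point while reading, for each
`v ≥ 1` the number of `v+1`'s read so far never exceeds the number of `v`'s. -/
def IsLattice (D : Set (ℕ × ℕ)) (T : ℕ × ℕ → ℕ) : Prop :=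
  ∀ q ∈ D, ∀ v, 1 ≤ v →
    ({p ∈ readUpTo D q | T p = v + 1}).ncard ≤ ({p ∈ readUpTo D q | T p = v}).ncard

/-- The number of entries of `T` (on the shape `D`) equal to `v`. -/
noncomputable def contentOf (D : Set (ℕ × ℕ)) (T : ℕ × ℕ → ℕ) (v : ℕ) : ℕ :=
  ({p ∈ D | T p = v}).ncard

/-- The number of SSYT of shape `D` with lattice reading word and content `ν`
(`ν v` = number of entries equal to `v`, for `v ≥ 1`).  By the
Littlewood-Richardson rule this is the coefficient of the Schur function `s_ν`
in the skew Schur function `s_D`. -/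
noncomputable def LRcount (D : Set (ℕ × ℕ)) (nu : ℕ → ℕ) : ℕ :=
  {T : ℕ × ℕ → ℕ | IsSSYT D T ∧ IsLattice D T ∧ ∀ v, 1 ≤ v → contentOf D T v = nu v}.ncard

/-- The number of SSYT of shape `D` with content `α`.  For `α` supported on
`{1,…,m}` this is the coefficient of the monomial `x^α` in the skew Schur
polynomial `s_D(x_1,…,x_m)`; hence `s_{D₁} = s_{D₂}` in `m` variables iff
`SSYTcount D₁ α = SSYTcount D₂ α` for all such `α`. -/
noncomputable def SSYTcount (D : Set (ℕ × ℕ)) (alpha : ℕ → ℕ) : ℕ :=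
  {T : ℕ × ℕ → ℕ | IsSSYT D T ∧ ∀ v, 1 ≤ v → contentOf D T v = alpha v}.ncard

/-- `lam` is a partition, recorded as its weakly decreasing, eventually zero
sequence of row lengths: `lam i` is the length of row `i+1`. -/
def IsPartition (lam : ℕ → ℕ) : Prop :=
  (∀ i j, i ≤ j → lam j ≤ lam i) ∧ ∃ N, ∀ i, N ≤ i → lam i = 0

/-- The cells of the skew diagram `λ/δ_{k-1}` (in its own coordinates). -/
def skewCells (lam : ℕ → ℕ) (k : ℕ) : Set (ℕ × ℕ) :=
  {p | k - 1 - p.1 ≤ p.2 ∧ p.2 < lam p.1}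

/-- Two cells are adjacent if one is obtained from the other by a single step
up, down, left or right. -/
def AdjCells (p q : ℕ × ℕ) : Prop :=
  (p.1 = q.1 ∧ (p.2 + 1 = q.2 ∨ q.2 + 1 = p.2)) ∨
  (p.2 = q.2 ∧ (p.1 + 1 = q.1 ∨ q.1 + 1 = p.1))

/-- A diagram is connected if any two of its cells are joined by a path of
adjacent cells staying inside the diagram. -/
def IsConnectedDiagram (D : Set (ℕ × ℕ)) : Prop :=
  ∀ p ∈ D, ∀ q ∈ D, Relation.ReflTransGen (fun a b => AdjCells a b ∧ a ∈ D ∧ b ∈ D) p q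

/-- The cells of `D` strictly above row `r` with entry `v`. -/
def aboveRow (D : Set (ℕ × ℕ)) (T : ℕ × ℕ → ℕ) (r v : ℕ) : Set (ℕ × ℕ) :=
  {p | p ∈ D ∧ p.1 < r ∧ T p = v}

/-- The rows above `r` of the staircase carry the forced filling: row `i`, whose leftmost cell is in
column `k + n - 1 - i`, reads `1, 2, …, i + 1`. -/
def ForcedAbove (n k : ℕ) (T : ℕ × ℕ → ℕ) (r : ℕ) : Prop :=
  ∀ i j, i < r → (i, j) ∈ staircaseCells n k → T (i, j) + k + n = i + j + 2

section

variable {n k r : ℕ} {lam : ℕ → ℕ} {T : ℕ × ℕ → ℕ}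

theorem ncard_aboveRow (hr : r ≤ n) (hF : ForcedAbove n k T r) {v : ℕ} (hv : 1 ≤ v) :
    (aboveRow (SBF lam k n) T r v).Finite ∧ (aboveRow (SBF lam k n) T r v).ncard = r + 1 - v := by
  -- For each `i ∈ [v - 1, r)`, the value `v` occurs exactly once in row `i`.
  have h : aboveRow (SBF lam k n) T r v
      = (fun i => (i, k + n + v - 2 - i)) '' (Finset.Ico (v - 1) r : Set ℕ) := by
    ext ⟨i, j⟩
    simp only [aboveRow, Set.mem_ofPred_eq, Set.mem_image, Finset.coe_Ico, Set.mem_Ico,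
      Prod.mk.injEq]
    constructor
    · rintro ⟨hD, hi, hTv⟩
      have hs : (i, j) ∈ staircaseCells n k := by
        rcases hD with hD | hD
        · exact hD
        · have := hD.1
          simp only at this
          omega
      have h1 := hF i j hi hs
      simp only [staircaseCells, Set.mem_ofPred_eq] at hs
      exact ⟨i, by omega, rfl, by omega⟩
    · rintro ⟨i', hi', rfl, rfl⟩
      have hs : (i', k + n + v - 2 - i') ∈ staircaseCells n k := by
        simp only [staircaseCells, Set.mem_ofPred_eq]
        omega
      have h1 := hF i' _ hi'.2 hs
      exact ⟨Or.inl hs, hi'.2, by omega⟩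
  rw [h]
  refine ⟨(Finset.finite_toSet _).image _, ?_⟩
  rw [Set.ncard_image_of_injective _ (fun a b hab => (Prod.mk.inj hab).1), Set.ncard_coe_finset,
    Nat.card_Ico]
  omega

theorem finite_read (hl : lam 0 ≤ n + k) (hr : r ≤ n) (j v : ℕ) :
    {p ∈ readUpTo (SBF lam k n) (r, j) | T p = v}.Finite := by
  apply ((Set.finite_Iio (n + 1)).prod (Set.finite_Iio (n + k))).subset
  rintro ⟨a, b⟩ ⟨⟨hD, hq⟩, -⟩
  simp only [Set.mem_prod, Set.mem_Iio]
  rcases hD with hD | hD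
  · simp only [staircaseCells, Set.mem_ofPred_eq] at hD
    omega
  · simp only [foundationCells, Set.mem_ofPred_eq] at hD hq
    have ha : a = n := by omega
    subst ha
    have h2 := hD.2.2
    simp only [Nat.sub_self] at h2
    omega

/-- When an entry `w + 1` of row `r` is read, no `w` of this row has been read, so `w` has occurred
`r + 1 - w` times; this bounds the occurrences of `w + 1`. -/
theorem ncard_read_le (hr : r ≤ n) (hT : IsSSYT (SBF lam k n) T)
    (hlat : IsLattice (SBF lam k n) T) (hF : ForcedAbove n k T r) {j w : ℕ} (hw : 1 ≤ w)
    (hj : (r, j) ∈ SBF lam k n) (hTj : T (r, j) = w + 1) :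
    {p ∈ readUpTo (SBF lam k n) (r, j) | T p = w + 1}.ncard ≤ r + 1 - w := by
  obtain ⟨hfin, hcard⟩ := ncard_aboveRow (lam := lam) hr hF hw
  rw [← hcard]
  refine (hlat _ hj w hw).trans (Set.ncard_le_ncard ?_ hfin)
  rintro ⟨a, b⟩ ⟨⟨hD, hq⟩, hTp⟩
  refine ⟨hD, ?_, hTp⟩
  rcases hq with hq | ⟨hq, hb⟩
  · exact hq
  · simp only at hq hb
    subst hq
    have := hT.2.2.1 a j b hb hj hD
    omega

theorem row_le (hl : lam 0 ≤ n + k) (hr : r ≤ n) (hT : IsSSYT (SBF lam k n) T)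
    (hlat : IsLattice (SBF lam k n) T) (hF : ForcedAbove n k T r) {j : ℕ}
    (hj : (r, j) ∈ SBF lam k n) : T (r, j) ≤ r + 1 := by
  by_contra! hlt
  obtain ⟨w, hw⟩ : ∃ w, T (r, j) = w + 1 := ⟨T (r, j) - 1, by omega⟩
  have h := ncard_read_le hr hT hlat hF (by omega) hj hw
  have hpos : 0 < {p ∈ readUpTo (SBF lam k n) (r, j) | T p = w + 1}.ncard :=
    (Set.ncard_pos (finite_read hl hr j _)).2 ⟨(r, j), ⟨hj, Or.inr ⟨rfl, le_rfl⟩⟩, hw⟩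
  omega

theorem row_strict (hl : lam 0 ≤ n + k) (hr : r ≤ n) (hT : IsSSYT (SBF lam k n) T)
    (hlat : IsLattice (SBF lam k n) T) (hF : ForcedAbove n k T r) {j₁ j₂ : ℕ}
    (h₁ : (r, j₁) ∈ SBF lam k n) (h₂ : (r, j₂) ∈ SBF lam k n) (hlt : j₁ < j₂)
    (h2 : 2 ≤ T (r, j₁)) : T (r, j₁) < T (r, j₂) := by
  refine lt_of_le_of_ne (hT.2.2.1 r j₁ j₂ hlt.le h₁ h₂) fun heq => ?_
  obtain ⟨w, hw⟩ : ∃ w, T (r, j₁) = w + 1 := ⟨T (r, j₁) - 1, by omega⟩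
  have hle := row_le hl hr hT hlat hF h₁
  have h := ncard_read_le hr hT hlat hF (by omega) h₁ hw
  -- The `r - w` occurrences of `w + 1` above row `r`, and the two in row `r`, have been read.
  obtain ⟨hfin, hcard⟩ := ncard_aboveRow (lam := lam) hr hF (show 1 ≤ w + 1 by omega)
  have hsub : insert (r, j₁) (insert (r, j₂) (aboveRow (SBF lam k n) T r (w + 1))) ⊆
      {p ∈ readUpTo (SBF lam k n) (r, j₁) | T p = w + 1} := by
    rintro p (rfl | rfl | ⟨hD, hp, hTp⟩)
    · exact ⟨⟨h₁, Or.inr ⟨rfl, le_rfl⟩⟩, hw⟩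
    · exact ⟨⟨h₂, Or.inr ⟨rfl, hlt.le⟩⟩, heq ▸ hw⟩
    · exact ⟨⟨hD, Or.inl hp⟩, hTp⟩
  have hcount := Set.ncard_le_ncard hsub (finite_read hl hr j₁ _)
  have hnot : ∀ j, (r, j) ∉ aboveRow (SBF lam k n) T r (w + 1) := fun j hj => lt_irrefl r hj.2.1
  rw [Set.ncard_insert_of_notMem _ (hfin.insert _), Set.ncard_insert_of_notMem (hnot j₂) hfin,
    hcard] at hcount
  · omega
  · rintro (h' | h')
    · exact hlt.ne (Prod.mk.inj h').2
    · exact hnot _ h'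

/-- A lattice semistandard filling of the staircase is forced. -/
theorem staircase_entry (hl : lam 0 ≤ n + k) (hT : IsSSYT (SBF lam k n) T)
    (hlat : IsLattice (SBF lam k n) T) : ∀ r, r ≤ n → ForcedAbove n k T r := by
  intro r
  induction r with
  | zero => exact fun _ i j hi => absurd hi (Nat.not_lt_zero _)
  | succ r ih =>
    intro hr
    have hF := ih (by omega)
    intro i j hi hs
    rcases Nat.lt_succ_iff_lt_or_eq.1 hi with hi | rfl
    · exact hF i j hi hs
    have mem : ∀ d, d ≤ i → (i, k + n - 1 - d) ∈ staircaseCells n k := by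
      intro d hd
      simp only [staircaseCells, Set.mem_ofPred_eq]
      omega
    -- Upper bound, moving left from the last cell of the row.
    have upper : ∀ d, d ≤ i → T (i, k + n - 1 - d) + d ≤ i + 1 := by
      intro d
      induction d with
      | zero => exact fun hd => row_le hl (by omega) hT hlat hF (Or.inl (mem 0 hd))
      | succ d ihd =>
        intro hd
        have h1 := ihd (by omega)
        by_cases h2 : 2 ≤ T (i, k + n - 1 - (d + 1))
        · have := row_strict hl (by omega) hT hlat hF (Or.inl (mem (d + 1) hd))
            (Or.inl (mem d (by omega))) (by omega) h2
          omega
        · omega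
    have hs' := hs
    simp only [staircaseCells, Set.mem_ofPred_eq] at hs'
    have hu := upper (k + n - 1 - j) (by omega)
    rw [show k + n - 1 - (k + n - 1 - j) = j by omega] at hu
    have hpos := hT.1 _ (Or.inl hs)
    -- Lower bound: positivity at the leftmost cell, the column condition elsewhere.
    by_cases hj : j = k + n - 1 - i
    · omega
    · have hs0 : (i - 1, j) ∈ staircaseCells n k := by
        simp only [staircaseCells, Set.mem_ofPred_eq]
        omega
      have h1 := hF (i - 1) j (by omega) hs0
      have h2 := hT.2.2.2 (i - 1) i j (by omega) (Or.inl hs0) (Or.inl hs)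
      omega

end

/-- Let `𝒮(λ,k,n)` be a staircase with bad foundation and
`T` a semistandard Young tableau of shape `𝒮(λ,k,n)` whose reading word is
lattice.  Then the entries in the first row of the foundation `λ/δ_{k-1}`
(which is row `n` of `𝒮(λ,k,n)`) form a strictly increasing sequence of values
from `{2,…,n+1}` if `k = 0`, and from `{1,…,n+1}` if `k > 0`. -/
theorem firstRow_of_foundation_strictly_increasing
    (n k : ℕ) (lam : ℕ → ℕ) (hn : 1 ≤ n) (hpart : IsPartition lam)
    (hdelta : ∀ i, i + 1 < k → k - 1 - i ≤ lam i)
    (hconn : IsConnectedDiagram (skewCells lam k))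
    (hk : k ≤ lam 0) (hl : lam 0 ≤ n + k)
    (T : ℕ × ℕ → ℕ)
    (hT : IsSSYT (SBF lam k n) T) (hlat : IsLattice (SBF lam k n) T) :
    (∀ j1 j2, (n, j1) ∈ foundationCells lam k n → (n, j2) ∈ foundationCells lam k n →
      j1 < j2 → T (n, j1) < T (n, j2)) ∧
    (∀ j, (n, j) ∈ foundationCells lam k n →
      (if k = 0 then 2 else 1) ≤ T (n, j) ∧ T (n, j) ≤ n + 1) := by
  have hF := staircase_entry hl hT hlat n le_rfl
  have low : ∀ j, (n, j) ∈ foundationCells lam k n → k ≤ j → 2 ≤ T (n, j) := by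
    intro j hj hkj
    have hj2 := hj.2.2
    simp only [Nat.sub_self] at hj2
    have hs : (n - 1, j) ∈ staircaseCells n k := by
      simp only [staircaseCells, Set.mem_ofPred_eq]
      omega
    have h1 := hT.1 _ (Or.inl hs)
    have h2 := hT.2.2.2 (n - 1) n j (by omega) (Or.inl hs) (Or.inr hj)
    omega
  refine ⟨fun j1 j2 h1 h2 hlt => ?_, fun j hj =>
    ⟨?_, row_le hl le_rfl hT hlat hF (Or.inr hj)⟩⟩
  · by_cases h : 2 ≤ T (n, j1)
    · exact row_strict hl le_rfl hT hlat hF (Or.inr h1) (Or.inr h2) hlt h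
    · -- Row `n` starts in column `k - 1`, so `j2 ≥ k` and the entry there is at least `2`.
      have hj1 := h1.2.1
      simp only [Nat.sub_self] at hj1
      have := low j2 h2 (by omega)
      omega
  · split_ifs with h0
    · exact low j hj (by omega)
    · exact hT.1 _ (Or.inr hj)
end

section
/- Let n ≥ 1 and 0 ≤ k ≤ 1, and let λ be a partition with λ_1 ≤ n+k. Let λ ⊕ Δ_n denote the disconnected skew diagram in which λ is placed strictly below and strictly to the left of Δ_n (sharing no row or column). If T is a semistandard Young tableau of shape λ ⊕ Δ_n with lattice reading word such that the first row of λ contains at most k entries equal to 1, then the tableau of shape S(λ,k,n) obtained from T by shifting the entries of λ to the right into the foundation position of S(λ,k,n) is again a semistandard Young tableau with lattice reading word. -/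
/-- The cells of the disconnected skew diagram `λ ⊕ Δ_n`: the partition `λ`
is placed strictly below and strictly to the left of `Δ_n`, sharing no row or
column (`Δ_n` occupies rows `0,…,n-1` and columns `λ₁,…,λ₁+n-1`, while `λ`
occupies rows `n,n+1,…` and columns `0,…,λ₁-1`). -/
def oplusCells (lam : ℕ → ℕ) (n : ℕ) : Set (ℕ × ℕ) :=
  {p | p.1 < n ∧ lam 0 + n - 1 - p.1 ≤ p.2 ∧ p.2 < lam 0 + n} ∪
  {p | n ≤ p.1 ∧ p.2 < lam (p.1 - n)}

theorem finite_readUpTo (lam : ℕ → ℕ) (n : ℕ) (hpart : IsPartition lam) (q : ℕ × ℕ) :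
    (readUpTo (oplusCells lam n) q).Finite := by
  apply (Set.finite_Iic ((q.1, lam 0 + n) : ℕ × ℕ)).subset
  rintro ⟨i, c⟩ ⟨hD, hq⟩
  have hm := hpart.1 0 (i - n) (Nat.zero_le _)
  simp only [oplusCells, Set.mem_union, Set.mem_ofPred_eq] at hD
  simp only [Set.mem_Iic, Prod.mk_le_mk]
  omega

/-- A lattice word cannot have its `v`s read so far injected into its `v + 1`s read so far in such a
way that some `v + 1` is missed. -/
theorem lattice_contra (lam : ℕ → ℕ) (n : ℕ) (hpart : IsPartition lam) (T : ℕ × ℕ → ℕ)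
    (hlat : IsLattice (oplusCells lam n) T) (q : ℕ × ℕ) (hq : q ∈ oplusCells lam n)
    (v : ℕ) (hv : 1 ≤ v) (f : ℕ × ℕ → ℕ × ℕ) (x : ℕ × ℕ)
    (hx : x ∈ readUpTo (oplusCells lam n) q) (hxv : T x = v + 1)
    (hf : ∀ p ∈ readUpTo (oplusCells lam n) q, T p = v →
      f p ∈ readUpTo (oplusCells lam n) q ∧ T (f p) = v + 1 ∧ f p ≠ x)
    (hinj : Set.InjOn f {p ∈ readUpTo (oplusCells lam n) q | T p = v}) : False := by
  have h := hlat q hq v hv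
  have hfin : ({p ∈ readUpTo (oplusCells lam n) q | T p = v + 1}).Finite :=
    (finite_readUpTo lam n hpart q).subset (fun p hp => hp.1)
  have hlt : (f '' {p ∈ readUpTo (oplusCells lam n) q | T p = v}).ncard <
      ({p ∈ readUpTo (oplusCells lam n) q | T p = v + 1}).ncard := by
    apply Set.ncard_lt_ncard _ hfin
    refine ⟨?_, fun hsub => ?_⟩
    · rintro _ ⟨p, hp, rfl⟩
      exact ⟨(hf p hp.1 hp.2).1, (hf p hp.1 hp.2).2.1⟩
    · obtain ⟨p, hp, hpx⟩ := hsub ⟨hx, hxv⟩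
      exact (hf p hp.1 hp.2).2.2 hpx
  rw [hinj.ncard_image] at hlt
  omega

/-- The lattice filling of `Δ_n` is unique: with `d = λ₁ + n - 1 - c` the index of a column counted
from the right, the entry in row `i` is `i - d + 1`. -/
theorem staircase_entry_s1 (lam : ℕ → ℕ) (n : ℕ) (hpart : IsPartition lam) (T : ℕ × ℕ → ℕ)
    (hT : IsSSYT (oplusCells lam n) T) (hlat : IsLattice (oplusCells lam n) T) :
    ∀ i, i < n → ∀ d, d ≤ i → T (i, lam 0 + n - 1 - d) + d = i + 1 := by
  obtain ⟨hpos, -, hrow, hcol⟩ := hT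
  have hmem : ∀ i d, i < n → d ≤ i → (i, lam 0 + n - 1 - d) ∈ oplusCells lam n := by
    intro i d hi hd
    left
    simp only [Set.mem_ofPred_eq]
    omega
  intro i
  induction i using Nat.strong_induction_on with
  | _ i ihi =>
  intro hi d
  induction d using Nat.strong_induction_on with
  | _ d ihd =>
  intro hd
  have hlow : i + 1 ≤ T (i, lam 0 + n - 1 - d) + d := by
    rcases hd.lt_or_eq with h | h
    · have h1 := ihi (i - 1) (by omega) (by omega) d (by omega)
      have h2 := hcol (i - 1) i (lam 0 + n - 1 - d) (by omega)
        (hmem _ _ (by omega) (by omega)) (hmem _ _ hi hd)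
      omega
    · have h1 := hpos _ (hmem i d hi hd)
      omega
  have hup : 1 ≤ d → T (i, lam 0 + n - 1 - d) + d ≤ i + 2 := by
    intro h
    have h1 := ihd (d - 1) (by omega) (by omega)
    have h2 := hrow i (lam 0 + n - 1 - d) (lam 0 + n - 1 - (d - 1)) (by omega)
      (hmem _ _ hi hd) (hmem _ _ hi (by omega))
    omega
  by_contra hne
  obtain ⟨v, hv⟩ : ∃ v, T (i, lam 0 + n - 1 - d) = v + 1 :=
    ⟨T (i, lam 0 + n - 1 - d) - 1, by omega⟩
  refine lattice_contra lam n hpart T hlat (i, lam 0 + n - 1 - d) (hmem i d hi hd) v (by omega)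
    (fun p => (p.1 + 1, p.2)) (i, lam 0 + n - 1 - d) ⟨hmem i d hi hd, Or.inr ⟨rfl, le_rfl⟩⟩ hv ?_ ?_
  · rintro ⟨i', c⟩ ⟨hD, hq⟩ hTv
    simp only at hq
    obtain ⟨d', hd', rfl⟩ : ∃ d', d' ≤ i' ∧ c = lam 0 + n - 1 - d' := by
      simp only [oplusCells, Set.mem_union, Set.mem_ofPred_eq] at hD
      exact ⟨lam 0 + n - 1 - c, by omega, by omega⟩
    -- the current row contains no `v` yet, since its entries read so far exceed `v`
    have hlt : i' < i := by
      by_contra hge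
      have hii : i' = i := by omega
      subst hii
      rcases Nat.lt_or_ge d' d with h | h
      · have := ihd d' h (by omega)
        have := hup (by omega)
        omega
      · have hdd : lam 0 + n - 1 - d' = lam 0 + n - 1 - d := by omega
        rw [hdd] at hTv
        omega
    have hval := ihi i' hlt (by omega) d' hd'
    have hval' : T (i' + 1, lam 0 + n - 1 - d') + d' = i' + 2 ∧ (i' + 1 = i → d' < d) := by
      rcases Nat.lt_or_ge (i' + 1) i with h | h
      · exact ⟨ihi (i' + 1) h (by omega) d' (by omega), by omega⟩
      · have hii : i' + 1 = i := by omega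
        have hdd : d' < d := by omega
        have := ihd d' hdd (by omega)
        rw [hii]
        exact ⟨by omega, fun _ => hdd⟩
    refine ⟨⟨hmem _ _ (by omega) (by omega), ?_⟩, ?_, ?_⟩
    · simp only
      omega
    · simp only
      omega
    · simp only [ne_eq, Prod.mk.injEq]
      omega
  · rintro ⟨a, b⟩ - ⟨a', b'⟩ - h
    simp only [Prod.mk.injEq] at h ⊢
    omega

/-- No value `≥ 2` is repeated in the first row of `λ`. -/
theorem first_row_strict (lam : ℕ → ℕ) (n : ℕ) (hn : 1 ≤ n) (hpart : IsPartition lam)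
    (T : ℕ × ℕ → ℕ)
    (hT : IsSSYT (oplusCells lam n) T) (hlat : IsLattice (oplusCells lam n) T)
    (j : ℕ) (hj : j + 1 < lam 0) (h2 : 2 ≤ T (n, j)) : T (n, j) < T (n, j + 1) := by
  have hst := staircase_entry_s1 lam n hpart T hT hlat
  obtain ⟨-, -, hrow, -⟩ := hT
  have hmem : ∀ c, c < lam 0 → (n, c) ∈ oplusCells lam n := by
    intro c hc
    right
    simpa using hc
  have hle := hrow n j (j + 1) (by omega) (hmem _ (by omega)) (hmem _ hj)
  by_contra hge
  obtain ⟨v, hv⟩ : ∃ v, T (n, j) = v + 1 := ⟨T (n, j) - 1, by omega⟩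
  -- every `v` read by now lies in the staircase; it is either directly above a `v + 1` of the
  -- staircase or the only `v` of the bottom row, and the latter is matched with the cell `(n, j)`
  have key : ∀ p ∈ readUpTo (oplusCells lam n) (n, j), T p = v →
      p.1 < n ∧ ∃ d, d ≤ p.1 ∧ p.2 = lam 0 + n - 1 - d ∧ v + d = p.1 + 1 := by
    rintro ⟨i, c⟩ ⟨hD, hq⟩ hTv
    simp only at hq
    have hin : i < n := by
      by_contra hge
      have hi : i = n := by omega
      subst hi
      have hc : c < lam 0 := by
        simpa [oplusCells] using hD
      have := hrow i j c (by omega) (hmem _ (by omega)) hD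
      omega
    simp only [oplusCells, Set.mem_union, Set.mem_ofPred_eq] at hD
    obtain ⟨d, hd, rfl⟩ : ∃ d, d ≤ i ∧ c = lam 0 + n - 1 - d :=
      ⟨lam 0 + n - 1 - c, by omega, by omega⟩
    have := hst i hin d hd
    exact ⟨hin, d, hd, rfl, by simp only; omega⟩
  refine lattice_contra lam n hpart T hlat (n, j) (hmem j (by omega)) v (by omega)
    (fun p => if p.1 + 1 < n then (p.1 + 1, p.2) else (n, j)) (n, j + 1)
    ⟨hmem _ hj, Or.inr ⟨rfl, by simp⟩⟩ (by omega) ?_ ?_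
  · intro p hp hTv
    obtain ⟨hin, d, hd, hc, hvd⟩ := key p hp hTv
    by_cases h : p.1 + 1 < n
    · simp only [h, if_true]
      have h1 := hst (p.1 + 1) h d (by omega)
      refine ⟨⟨?_, ?_⟩, ?_, ?_⟩
      · left
        simp only [Set.mem_ofPred_eq]
        omega
      · simp only
        omega
      · rw [hc]
        omega
      · simp only [ne_eq, Prod.mk.injEq]
        omega
    · simp only [h, if_false]
      exact ⟨⟨hmem j (by omega), Or.inr ⟨rfl, le_rfl⟩⟩, hv, by simp⟩
  · intro p hp p' hp' h
    obtain ⟨hin, d, hd, hc, hvd⟩ := key p hp.1 hp.2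
    obtain ⟨hin', d', hd', hc', hvd'⟩ := key p' hp'.1 hp'.2
    apply Prod.ext_iff.2
    simp only at h
    split_ifs at h <;> simp only [Prod.mk.injEq] at h <;> omega

theorem first_row_lower (lam : ℕ → ℕ) (n k : ℕ) (hn : 1 ≤ n) (hpart : IsPartition lam)
    (T : ℕ × ℕ → ℕ)
    (hT : IsSSYT (oplusCells lam n) T) (hlat : IsLattice (oplusCells lam n) T)
    (hones : ({j | j < lam 0 ∧ T (n, j) = 1}).ncard ≤ k) :
    ∀ j, k ≤ j → j < lam 0 → j + 2 ≤ T (n, j) + k := by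
  have hstrict := first_row_strict lam n hn hpart T hT hlat
  obtain ⟨hpos, -, hrow, -⟩ := hT
  have hmem : ∀ c, c < lam 0 → (n, c) ∈ oplusCells lam n := by
    intro c hc
    right
    simpa using hc
  intro j hkj
  induction j, hkj using Nat.le_induction with
  | base =>
    intro hk
    by_contra hlt
    -- otherwise columns `0, …, k` all hold a `1`
    have hsub : Set.Iic k ⊆ {j | j < lam 0 ∧ T (n, j) = 1} := by
      intro c hc
      simp only [Set.mem_Iic] at hc
      have h1 := hpos _ (hmem c (by omega))
      have h2 := hrow n c k hc (hmem _ (by omega)) (hmem _ hk)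
      exact ⟨by omega, by omega⟩
    have hcard := Set.ncard_le_ncard hsub ((Set.finite_Iio (lam 0)).subset fun c hc => hc.1)
    have hk1 : (Set.Iic k).ncard = k + 1 := by
      rw [← Finset.coe_Iic, Set.ncard_coe_finset, Nat.card_Iic]
    omega
  | succ j hkj ih =>
    intro hj
    have h1 := ih (by omega)
    have h2 := hstrict j hj (by omega)
    omega

/-- Let `n ≥ 1`, `0 ≤ k ≤ 1` and let `λ` be a partition with
`λ₁ ≤ n + k` (and `k ≤ λ₁`, so that `𝒮(λ,k,n)` is defined).  If `T` is a SSYT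
of shape `λ ⊕ Δ_n` with lattice reading word having at most `k` entries equal
to `1` in the first row of `λ`, then the tableau of shape `𝒮(λ,k,n)` obtained
from `T` by shifting the entries of `λ` to the right into the foundation
position (equivalently, shifting `Δ_n` left by `λ₁ - k` columns) is again a
SSYT with lattice reading word. -/
theorem shift_foundation_ssyt_lattice
    (n k : ℕ) (lam : ℕ → ℕ) (hn : 1 ≤ n) (hk : k ≤ 1) (hpart : IsPartition lam)
    (hkl : k ≤ lam 0) (hl : lam 0 ≤ n + k)
    (T : ℕ × ℕ → ℕ)
    (hT : IsSSYT (oplusCells lam n) T) (hlat : IsLattice (oplusCells lam n) T)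
    (hones : ({j | j < lam 0 ∧ T (n, j) = 1}).ncard ≤ k) :
    IsSSYT (SBF lam k n) (fun p => if p.1 < n then T (p.1, p.2 + (lam 0 - k)) else T p) ∧
    IsLattice (SBF lam k n) (fun p => if p.1 < n then T (p.1, p.2 + (lam 0 - k)) else T p) := by
  have hst := staircase_entry_s1 lam n hpart T hT hlat
  have hfirst := first_row_lower lam n k hn hpart T hT hlat hones
  obtain ⟨hpos, hzero, hrow, hcol⟩ := hT
  -- `φ` carries the cells of `S(λ,k,n)` to those of `λ ⊕ Δ_n`
  set φ : ℕ × ℕ → ℕ × ℕ := fun p => if p.1 < n then (p.1, p.2 + (lam 0 - k)) else p with hφ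
  have hT' : (fun p : ℕ × ℕ => if p.1 < n then T (p.1, p.2 + (lam 0 - k)) else T p)
      = fun p => T (φ p) := by
    funext p
    simp only [hφ]
    split_ifs <;> rfl
  have hφt : ∀ i j, i < n → φ (i, j) = (i, j + (lam 0 - k)) := by
    intro i j h
    simp [hφ, h]
  have hφb : ∀ i j, n ≤ i → φ (i, j) = (i, j) := by
    intro i j h
    simp [hφ, h]
  have hmem : ∀ p, p ∈ SBF lam k n ↔ φ p ∈ oplusCells lam n := by
    rintro ⟨i, j⟩
    rcases Nat.lt_or_ge i n with h | h
    · rw [hφt i j h]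
      simp only [SBF, staircaseCells, foundationCells, oplusCells, Set.mem_union, Set.mem_ofPred_eq]
      omega
    · rw [hφb i j h]
      simp only [SBF, staircaseCells, foundationCells, oplusCells, Set.mem_union, Set.mem_ofPred_eq]
      omega
  have hinj : Function.Injective φ := by
    rintro ⟨a, b⟩ ⟨a', b'⟩ h
    simp only [hφ] at h
    split_ifs at h <;> simp only [Prod.mk.injEq] at h ⊢ <;> omega
  rw [hT']
  refine ⟨⟨fun p hp => hpos _ ((hmem p).1 hp), fun p hp => hzero _ (fun h => hp ((hmem p).2 h)),
    ?_, ?_⟩, ?_⟩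
  · intro i j1 j2 hj h1 h2
    have h1 := (hmem _).1 h1
    have h2 := (hmem _).1 h2
    simp only
    rcases Nat.lt_or_ge i n with h | h
    · rw [hφt _ _ h] at h1 h2 ⊢
      rw [hφt _ _ h]
      exact hrow _ _ _ (by omega) h1 h2
    · rw [hφb _ _ h] at h1 h2 ⊢
      rw [hφb _ _ h]
      exact hrow _ _ _ hj h1 h2
  · intro i1 i2 j hi h1 h2
    have h1 := (hmem _).1 h1
    have h2 := (hmem _).1 h2
    simp only
    rcases Nat.lt_or_ge i2 n with h | h
    · rw [hφt i1 _ (by omega)] at h1 ⊢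
      rw [hφt i2 _ h] at h2 ⊢
      exact hcol _ _ _ hi h1 h2
    · rw [hφb i2 _ h] at h2 ⊢
      rcases Nat.lt_or_ge i1 n with h' | h'
      · rw [hφt i1 _ h'] at h1 ⊢
        have hm := hpart.1 0 (i2 - n) (Nat.zero_le _)
        have hj : j < lam (i2 - n) := by
          simp only [oplusCells, Set.mem_union, Set.mem_ofPred_eq] at h2
          omega
        have hc : lam 0 + n - 1 - i1 ≤ j + (lam 0 - k) ∧ j + (lam 0 - k) < lam 0 + n := by
          simp only [oplusCells, Set.mem_union, Set.mem_ofPred_eq] at h1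
          omega
        have hent := hst i1 h' (lam 0 + n - 1 - (j + (lam 0 - k))) (by omega)
        rw [show lam 0 + n - 1 - (lam 0 + n - 1 - (j + (lam 0 - k))) = j + (lam 0 - k) by omega]
          at hent
        have hlow := hfirst j (by omega) (by omega)
        have hdown : T (n, j) ≤ T (i2, j) := by
          rcases h.lt_or_eq with h3 | h3
          · refine (hcol n i2 j h3 ?_ h2).le
            right
            simp only [Set.mem_ofPred_eq, Nat.sub_self]
            omega
          · rw [h3]
        omega
      · rw [hφb i1 _ h'] at h1 ⊢
        exact hcol _ _ _ hi h1 h2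
  · intro q hq v hv
    have hread : ∀ p, p ∈ readUpTo (SBF lam k n) q ↔ φ p ∈ readUpTo (oplusCells lam n) (φ q) := by
      intro p
      simp only [readUpTo, Set.mem_ofPred_eq, hmem p]
      refine and_congr_right fun _ => ?_
      simp only [hφ]
      split_ifs <;> simp only <;> omega
    have hsurj : ∀ p ∈ oplusCells lam n, ∃ p', φ p' = p := by
      rintro ⟨i, j⟩ hp
      rcases Nat.lt_or_ge i n with h | h
      · refine ⟨(i, j - (lam 0 - k)), ?_⟩
        rw [hφt _ _ h]
        simp only [oplusCells, Set.mem_union, Set.mem_ofPred_eq] at hp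
        simp only [Prod.mk.injEq, true_and]
        omega
      · exact ⟨(i, j), hφb _ _ h⟩
    have hcard : ∀ w, ({p ∈ readUpTo (SBF lam k n) q | T (φ p) = w}).ncard =
        ({p ∈ readUpTo (oplusCells lam n) (φ q) | T p = w}).ncard := by
      intro w
      rw [← Set.ncard_image_of_injective _ hinj]
      congr 1
      ext p
      constructor
      · rintro ⟨p', hp', rfl⟩
        exact ⟨(hread p').1 hp'.1, hp'.2⟩
      · rintro ⟨hp, hw⟩
        obtain ⟨p', rfl⟩ := hsurj p hp.1
        exact ⟨p', ⟨(hread p').2 hp, hw⟩, rfl⟩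
    rw [hcard, hcard]
    exact hlat _ ((hmem q).1 hq) v hv
end

section
/- For every n ≥ 1 there is exactly one semistandard Young tableau of the skew shape Δ_n = (n^n)/δ_{n−1} whose reading word is lattice; in it the row of length i is filled with the entries 1, 2, …, i, so its content is δ_n = (n, n−1, …, 2, 1). -/
theorem mem_staircaseCells_zero {n i j : ℕ} :
    (i, j) ∈ staircaseCells n 0 ↔ i < n ∧ n - 1 - i ≤ j ∧ j < n := by
  simp [staircaseCells]

theorem staircaseCells_finite (n k : ℕ) : (staircaseCells n k).Finite := by
  refine ((Set.finite_Iio n).prod (Set.finite_Iio (n + k))).subset ?_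
  rintro ⟨i, j⟩ h
  simp only [staircaseCells, Set.mem_ofPred_eq] at h
  simp only [Set.mem_prod, Set.mem_Iio]
  omega

theorem readUpTo_sep_finite (n k : ℕ) (q : ℕ × ℕ) (P : ℕ × ℕ → Prop) :
    {p ∈ readUpTo (staircaseCells n k) q | P p}.Finite :=
  (staircaseCells_finite n k).subset fun _ h => h.1.1

/-- Upper bound for an entry, given all entries read before it: an entry exceeding
`i + j + 2 - n` breaks the lattice condition at `(i, j)`. -/
theorem entry_le {n : ℕ} {T : ℕ × ℕ → ℕ} (hS : IsSSYT (staircaseCells n 0) T)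
    (hL : IsLattice (staircaseCells n 0) T) {i j : ℕ} (hq : (i, j) ∈ staircaseCells n 0)
    (hprev : ∀ r c, (r, c) ∈ staircaseCells n 0 → (r < i ∨ (r = i ∧ j < c)) →
      T (r, c) = r + c + 2 - n) :
    T (i, j) ≤ i + j + 2 - n := by
  obtain ⟨-, -, hrow, -⟩ := hS
  by_contra! hlt
  have hq' := mem_staircaseCells_zero.1 hq
  obtain ⟨w, hw⟩ : ∃ w, T (i, j) = w + 1 := ⟨T (i, j) - 1, by omega⟩
  have hlat := hL (i, j) hq w (by omega)
  set A := {p ∈ readUpTo (staircaseCells n 0) (i, j) | T p = w} with hA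
  set B := {p ∈ readUpTo (staircaseCells n 0) (i, j) | T p = w + 1} with hB
  have hBfin : B.Finite := readUpTo_sep_finite n 0 _ _
  have hqB : (i, j) ∈ B := ⟨⟨hq, Or.inr ⟨rfl, le_rfl⟩⟩, hw⟩
  have hAB : A.ncard ≤ (B \ {(i, j)}).ncard := by
    refine Set.ncard_le_ncard_of_injOn (fun p => (p.1 + 1, p.2)) ?_ ?_ hBfin.sdiff
    · rintro ⟨r, c⟩ ⟨⟨hmem, hread⟩, hval⟩
      have hmem' := mem_staircaseCells_zero.1 hmem
      -- the rest of row `i` read so far has entries at least `w + 1`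
      have hri : r < i := by
        rcases hread with h | ⟨h, hjc⟩
        · exact h
        · simp only at h hjc
          subst h
          have := hrow r j c hjc hq hmem
          omega
      have hrc := hprev r c hmem (Or.inl hri)
      -- a `w` in row `i - 1` lies to the right of column `j`, as `w ≥ i + j + 2 - n`
      have hpos : r + 1 < i ∨ (r + 1 = i ∧ j < c) := by omega
      have hmem2 : (r + 1, c) ∈ staircaseCells n 0 := mem_staircaseCells_zero.2 (by omega)
      have hval2 := hprev (r + 1) c hmem2 hpos
      refine ⟨⟨⟨hmem2, ?_⟩, ?_⟩, ?_⟩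
      · simp only
        omega
      · simp only
        omega
      · simp only [Set.mem_singleton_iff, Prod.mk.injEq]
        omega
    · rintro ⟨r, c⟩ - ⟨r', c'⟩ - h
      simpa using h
  have := Set.ncard_sdiff_singleton_lt_of_mem hqB hBfin
  omega

/-- A lattice semistandard tableau of shape `Δ_n` has the entry `i + j + 2 - n` at `(i, j)`. -/
theorem entry_eq {n : ℕ} {T : ℕ × ℕ → ℕ} (hS : IsSSYT (staircaseCells n 0) T)
    (hL : IsLattice (staircaseCells n 0) T) (i j : ℕ) (hq : (i, j) ∈ staircaseCells n 0) :
    T (i, j) = i + j + 2 - n := by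
  induction i using Nat.strong_induction_on generalizing j with
  | _ i ihi =>
    -- within row `i`, induct on the distance `d` to the right end
    obtain ⟨d, hd⟩ : ∃ d, d = n - j := ⟨_, rfl⟩
    induction d using Nat.strong_induction_on generalizing j with
    | _ d ihd =>
      have hq' := mem_staircaseCells_zero.1 hq
      refine le_antisymm (entry_le hS hL hq ?_) ?_
      · rintro r c hrc (h | ⟨rfl, h⟩)
        · exact ihi r h c hrc
        · exact ihd (n - c) (by omega) c hrc rfl
      · have hpos := hS.1 _ hq
        by_cases hfirst : i + j + 1 = n
        · omega
        · have hup : (i - 1, j) ∈ staircaseCells n 0 := mem_staircaseCells_zero.2 (by omega)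
          have h1 := ihi (i - 1) (by omega) j hup
          have h2 := hS.2.2.2 (i - 1) i j (by omega) hup hq
          omega

/-- The tableau filling the row of length `i` of `Δ_n` with `1, 2, …, i`. -/
def canonicalTableau (n : ℕ) : ℕ × ℕ → ℕ :=
  fun p => if p.1 < n ∧ n - 1 - p.1 ≤ p.2 ∧ p.2 < n then p.1 + p.2 + 2 - n else 0

theorem canonicalTableau_of_mem {n i j : ℕ} (h : (i, j) ∈ staircaseCells n 0) :
    canonicalTableau n (i, j) = i + j + 2 - n :=
  if_pos (mem_staircaseCells_zero.1 h)

theorem canonicalTableau_of_notMem {n i j : ℕ} (h : (i, j) ∉ staircaseCells n 0) :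
    canonicalTableau n (i, j) = 0 :=
  if_neg fun h' => h (mem_staircaseCells_zero.2 h')

theorem canonicalTableau_isSSYT (n : ℕ) :
    IsSSYT (staircaseCells n 0) (canonicalTableau n) := by
  refine ⟨?_, ?_, ?_, ?_⟩
  · rintro ⟨i, j⟩ h
    rw [canonicalTableau_of_mem h]
    have := mem_staircaseCells_zero.1 h
    omega
  · rintro ⟨i, j⟩ h
    exact canonicalTableau_of_notMem h
  · intro i j1 j2 hj h1 h2
    rw [canonicalTableau_of_mem h1, canonicalTableau_of_mem h2]
    omega
  · intro i1 i2 j hi h1 h2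
    rw [canonicalTableau_of_mem h1, canonicalTableau_of_mem h2]
    have := mem_staircaseCells_zero.1 h1
    omega

theorem canonicalTableau_isLattice (n : ℕ) :
    IsLattice (staircaseCells n 0) (canonicalTableau n) := by
  rintro ⟨i, j⟩ hq v hv
  -- a cell with entry at least `2` is not the first of its row, so the cell above it exists
  have hup : ∀ r c, (r, c) ∈ staircaseCells n 0 → canonicalTableau n (r, c) = v + 1 →
      1 ≤ r ∧ (r - 1, c) ∈ staircaseCells n 0 ∧ canonicalTableau n (r - 1, c) = v := by
    intro r c hmem hval
    rw [canonicalTableau_of_mem hmem] at hval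
    have hmem' := mem_staircaseCells_zero.1 hmem
    have hmem2 : (r - 1, c) ∈ staircaseCells n 0 := mem_staircaseCells_zero.2 (by omega)
    rw [canonicalTableau_of_mem hmem2]
    exact ⟨by omega, hmem2, by omega⟩
  refine Set.ncard_le_ncard_of_injOn (fun p => (p.1 - 1, p.2)) ?_ ?_
    (readUpTo_sep_finite n 0 _ _)
  · rintro ⟨r, c⟩ ⟨⟨hmem, hread⟩, hval⟩
    obtain ⟨hr, hmem2, hval2⟩ := hup r c hmem hval
    refine ⟨⟨hmem2, ?_⟩, hval2⟩
    simp only at hread ⊢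
    omega
  · rintro ⟨r, c⟩ ⟨⟨hmem, -⟩, hval⟩ ⟨r', c'⟩ ⟨⟨hmem', -⟩, hval'⟩ h
    have h1 := (hup r c hmem hval).1
    have h2 := (hup r' c' hmem' hval').1
    simp only [Prod.mk.injEq] at h ⊢
    omega

theorem contentOf_canonicalTableau (n v : ℕ) :
    contentOf (staircaseCells n 0) (canonicalTableau n) v =
      if 1 ≤ v ∧ v ≤ n then n + 1 - v else 0 := by
  -- the entry `v` occurs once in each of the rows `v - 1, …, n - 1`
  have hset : {p ∈ staircaseCells n 0 | canonicalTableau n p = v} =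
      if 1 ≤ v ∧ v ≤ n then
        (((Finset.Ico (v - 1) n).image fun r => (r, v + n - 2 - r) : Finset (ℕ × ℕ)) :
          Set (ℕ × ℕ))
      else ∅ := by
    ext ⟨i, j⟩
    have key : (i, j) ∈ {p ∈ staircaseCells n 0 | canonicalTableau n p = v} ↔
        (i < n ∧ n - 1 - i ≤ j ∧ j < n) ∧ i + j + 2 - n = v := by
      rw [Set.mem_sep_iff, ← mem_staircaseCells_zero]
      exact and_congr_right fun h => by rw [canonicalTableau_of_mem h]
    rw [key]
    split_ifs with hv
    · simp only [Finset.coe_image, Finset.coe_Ico, Set.mem_image, Set.mem_Ico, Prod.mk.injEq]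
      constructor
      · intro h
        exact ⟨i, by omega, rfl, by omega⟩
      · rintro ⟨r, hr, rfl, rfl⟩
        omega
    · simp only [Set.mem_empty_iff_false, iff_false]
      omega
  rw [contentOf, hset]
  split_ifs with hv
  · rw [Set.ncard_coe_finset, Finset.card_image_of_injective _
      (fun a b h => (Prod.mk.inj h).1), Nat.card_Ico]
    omega
  · exact Set.ncard_empty _

/-- For every `n ≥ 1` there is exactly one semistandard
Young tableau of the skew shape `Δ_n = (n^n)/δ_{n-1}` with lattice reading
word, namely the one filling the row of length `i` with the entries
`1, 2, …, i`; its content is `δ_n = (n, n-1, …, 2, 1)`. -/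
theorem unique_lattice_ssyt_of_rotated_staircase (n : ℕ) (hn : 1 ≤ n) :
    (∀ T : ℕ × ℕ → ℕ,
      (IsSSYT (staircaseCells n 0) T ∧ IsLattice (staircaseCells n 0) T) ↔
        T = fun p => if p.1 < n ∧ n - 1 - p.1 ≤ p.2 ∧ p.2 < n
          then p.1 + p.2 + 2 - n else 0) ∧
    (∀ v, contentOf (staircaseCells n 0)
        (fun p => if p.1 < n ∧ n - 1 - p.1 ≤ p.2 ∧ p.2 < n
          then p.1 + p.2 + 2 - n else 0) v =
        if 1 ≤ v ∧ v ≤ n then n + 1 - v else 0) := by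
  refine ⟨fun T => ⟨?_, ?_⟩, contentOf_canonicalTableau n⟩
  · rintro ⟨hS, hL⟩
    change T = canonicalTableau n
    ext ⟨i, j⟩
    by_cases h : (i, j) ∈ staircaseCells n 0
    · rw [entry_eq hS hL i j h, canonicalTableau_of_mem h]
    · rw [hS.2.1 _ h, canonicalTableau_of_notMem h]
  · rintro rfl
    exact ⟨canonicalTableau_isSSYT n, canonicalTableau_isLattice n⟩
end

section
/- Let n be a positive integer, let 0 ≤ k ≤ 1, and let λ be a partition with a single part satisfying λ_1 ≤ k+n. Then the difference s_{S(λ^t,k,n)} − s_{S(λ,k,n)} is Schur-positive. -/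
/-! ### Cells of the two shapes -/

theorem mem_SBF_of_lt {lam : ℕ → ℕ} {n k : ℕ} {p : ℕ × ℕ} (h : p.1 < n) :
    p ∈ SBF lam k n ↔ k + n ≤ p.1 + p.2 + 1 ∧ p.2 < n + k := by
  simp only [SBF, staircaseCells, foundationCells, Set.mem_union, Set.mem_ofPred_eq]
  omega

theorem mem_row_of_ge {n k m : ℕ} (hk : k ≤ 1) {p : ℕ × ℕ} (h : n ≤ p.1) :
    p ∈ SBF (fun i => if i = 0 then m else 0) k n ↔ p.1 = n ∧ p.2 < m := by
  simp only [SBF, staircaseCells, foundationCells, Set.mem_union, Set.mem_ofPred_eq]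
  split_ifs <;> omega

theorem mem_col_of_ge {n k m : ℕ} (hk : k ≤ 1) {p : ℕ × ℕ} (h : n ≤ p.1) :
    p ∈ SBF (fun i => if i < m then 1 else 0) k n ↔ p.2 = 0 ∧ p.1 < n + m := by
  simp only [SBF, staircaseCells, foundationCells, Set.mem_union, Set.mem_ofPred_eq]
  split_ifs <;> omega

theorem row_finite {n k m : ℕ} (hk : k ≤ 1) :
    (SBF (fun i => if i = 0 then m else 0) k n).Finite := by
  refine (Set.finite_Iic ((n, n + k + m) : ℕ × ℕ)).subset fun p hp => ?_
  rcases lt_or_ge p.1 n with h | h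
  · rw [mem_SBF_of_lt h] at hp
    exact ⟨by simpa using h.le, by simp; omega⟩
  · rw [mem_row_of_ge hk h] at hp
    exact ⟨by simp; omega, by simp; omega⟩

theorem col_finite {n k m : ℕ} (hk : k ≤ 1) :
    (SBF (fun i => if i < m then 1 else 0) k n).Finite := by
  refine (Set.finite_Iic ((n + m, n + k) : ℕ × ℕ)).subset fun p hp => ?_
  rcases lt_or_ge p.1 n with h | h
  · rw [mem_SBF_of_lt h] at hp
    exact ⟨by simp; omega, by simp; omega⟩
  · rw [mem_col_of_ge hk h] at hp
    exact ⟨by simp; omega, by simp; omega⟩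

/-! ### The unique Littlewood–Richardson filling of the staircase -/

/-- The cells of the first `N` rows of `Δ_n` lying on the antidiagonal that carries the
entry `v` in the filling whose row `i` reads `1, 2, …, i + 1`. -/
def diagCells (n k N v : ℕ) : Set (ℕ × ℕ) :=
  {p | p.1 < N ∧ k + n ≤ p.1 + p.2 + 1 ∧ p.2 < n + k ∧ p.1 + p.2 + 2 = v + k + n}

theorem diagCells_eq {n k N v : ℕ} (hN : N ≤ n) (hv : 1 ≤ v) :
    diagCells n k N v =
      ((Finset.Ico (v - 1) N).image fun i => (i, v + k + n - 2 - i) : Finset (ℕ × ℕ)) := by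
  ext ⟨i, j⟩
  simp only [diagCells, Set.mem_ofPred_eq, Finset.coe_image, Set.mem_image, Finset.coe_Ico,
    Set.mem_Ico, Prod.mk.injEq]
  constructor
  · intro h
    exact ⟨i, by omega, rfl, by omega⟩
  · rintro ⟨i', h, rfl, rfl⟩
    omega

theorem diagCells_finite {n k N v : ℕ} (hN : N ≤ n) (hv : 1 ≤ v) :
    (diagCells n k N v).Finite := by
  rw [diagCells_eq hN hv]; exact Finset.finite_toSet _

theorem diagCells_ncard {n k N v : ℕ} (hN : N ≤ n) (hv : 1 ≤ v) :
    (diagCells n k N v).ncard = N + 1 - v := by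
  rw [diagCells_eq hN hv, Set.ncard_coe_finset, Finset.card_image_of_injective, Nat.card_Ico]
  · omega
  · intro a b h
    simpa using (Prod.mk.inj h).1

/-- In any Littlewood–Richardson tableau on a staircase with bad foundation, row `i` of the
staircase part reads `1, 2, …, i + 1`. Columns force each entry to be at least this large; a
larger entry would break the lattice condition at the moment it is read. -/
theorem stair_entry {lam : ℕ → ℕ} {n k : ℕ} {T : ℕ × ℕ → ℕ}
    (hfin : (SBF lam k n).Finite)
    (hT : IsSSYT (SBF lam k n) T) (hL : IsLattice (SBF lam k n) T) :
    ∀ i, i < n → ∀ j, k + n ≤ i + j + 1 → j < n + k → T (i, j) + k + n = i + j + 2 := by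
  intro i
  induction i using Nat.strong_induction_on with
  | _ i ih =>
  intro hi
  suffices H : ∀ d j, d + j + 1 = n + k → k + n ≤ i + j + 1 →
      T (i, j) + k + n = i + j + 2 from
    fun j h1 h2 => H (n + k - 1 - j) j (by omega) h1
  intro d
  induction d using Nat.strong_induction_on with
  | _ d ihd =>
  intro j hd hj
  have hq : (i, j) ∈ SBF lam k n := (mem_SBF_of_lt hi).2 ⟨hj, by dsimp only; omega⟩
  have hpos := hT.1 _ hq
  have hlow : i + j + 2 ≤ T (i, j) + k + n := by
    rcases Nat.lt_or_ge (i + j) (k + n) with h | h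
    · omega
    · have h1 := ih (i - 1) (by omega) (by omega) j (by omega) (by omega)
      have h2 := hT.2.2.2 (i - 1) i j (by omega)
        ((mem_SBF_of_lt (by dsimp only; omega)).2 ⟨by dsimp only; omega, by dsimp only; omega⟩) hq
      omega
  by_contra hne
  have hgt : i + j + 2 < T (i, j) + k + n := by omega
  have hsub : ∀ v, {p ∈ readUpTo (SBF lam k n) (i, j) | T p = v}.Finite := fun v =>
    hfin.subset fun p hp => hp.1.1
  rcases Nat.eq_zero_or_pos d with rfl | hdpos
  · -- Rightmost cell of row `i`: the preceding rows hold no entry larger than `i`.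
    have hl := hL _ hq (T (i, j) - 1) (by omega)
    rw [Nat.sub_add_cancel hpos] at hl
    have h0 : {p ∈ readUpTo (SBF lam k n) (i, j) | T p = T (i, j) - 1} = ∅ := by
      ext ⟨a, b⟩
      simp only [readUpTo, Set.mem_ofPred_eq, Set.mem_empty_iff_false, iff_false]
      rintro ⟨⟨hD, hab⟩, hTp⟩
      rcases hab with h | ⟨h1, h2⟩
      · rw [mem_SBF_of_lt (by dsimp only; omega)] at hD
        dsimp only at hD
        have := ih a h (by omega) b (by omega) (by omega)
        omega
      · subst h1
        rw [mem_SBF_of_lt hi] at hD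
        dsimp only at hD
        obtain rfl : b = j := by omega
        omega
    have h1 : 0 < {p ∈ readUpTo (SBF lam k n) (i, j) | T p = T (i, j)}.ncard :=
      (Set.ncard_pos (hsub _)).2 ⟨(i, j), ⟨hq, Or.inr ⟨rfl, le_rfl⟩⟩, rfl⟩
    rw [h0, Set.ncard_empty] at hl
    omega
  · -- Otherwise the entry equals its right neighbour, so that value is read once too often.
    have hr := ihd (d - 1) (by omega) (j + 1) (by omega) (by omega)
    have hq' : (i, j + 1) ∈ SBF lam k n :=
      (mem_SBF_of_lt hi).2 ⟨by dsimp only; omega, by dsimp only; omega⟩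
    have hle := hT.2.2.1 i j (j + 1) (by omega) hq hq'
    obtain ⟨c, hc⟩ : ∃ c, T (i, j) = c + 1 := ⟨T (i, j) - 1, by omega⟩
    have hl := hL _ hq c (by omega)
    have hA : {p ∈ readUpTo (SBF lam k n) (i, j) | T p = c} ⊆ diagCells n k i c := by
      rintro ⟨a, b⟩
      simp only [readUpTo, diagCells, Set.mem_ofPred_eq]
      rintro ⟨⟨hD, hab⟩, hTp⟩
      rw [mem_SBF_of_lt (by dsimp only; omega)] at hD
      dsimp only at hD
      rcases hab with h | ⟨h1, h2⟩
      · have := ih a h (by omega) b (by omega) (by omega)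
        omega
      · subst h1
        have := hT.2.2.1 a j b h2 hq ((mem_SBF_of_lt hi).2 hD)
        omega
    have hB : insert (i, j) (insert (i, j + 1) (diagCells n k i (c + 1))) ⊆
        {p ∈ readUpTo (SBF lam k n) (i, j) | T p = c + 1} := by
      rintro p (rfl | rfl | hp)
      · exact ⟨⟨hq, Or.inr ⟨rfl, le_rfl⟩⟩, hc⟩
      · exact ⟨⟨hq', Or.inr ⟨rfl, by simp⟩⟩, by omega⟩
      · obtain ⟨a, b⟩ := p
        simp only [diagCells, Set.mem_ofPred_eq] at hp
        have := ih a hp.1 (by omega) b (by omega) (by omega)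
        refine ⟨⟨(mem_SBF_of_lt (by dsimp only; omega)).2
          ⟨by dsimp only; omega, by dsimp only; omega⟩, Or.inl hp.1⟩, by omega⟩
    have hfd := diagCells_finite (k := k) (v := c + 1) hi.le (by omega)
    have hA' := Set.ncard_le_ncard hA (diagCells_finite hi.le (by omega))
    have hB' := Set.ncard_le_ncard hB (hsub _)
    rw [Set.ncard_insert_of_notMem (by simp [diagCells]) (hfd.insert _),
      Set.ncard_insert_of_notMem (by simp [diagCells]) hfd,
      diagCells_ncard hi.le (by omega)] at hB'
    rw [diagCells_ncard hi.le (by omega)] at hA'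
    omega

/-! ### The foundation row -/

/-- The entries of a single-row foundation in a Littlewood–Richardson tableau are strictly
increasing and at most `n + 1`, and the one in column `j` is at least `j + 2 - k`. -/
theorem row_entries {n k m : ℕ} (hn : 1 ≤ n) (hk : k ≤ 1) {T : ℕ × ℕ → ℕ}
    (hT : IsSSYT (SBF (fun i => if i = 0 then m else 0) k n) T)
    (hL : IsLattice (SBF (fun i => if i = 0 then m else 0) k n) T) :
    (∀ j, j < m → j + 2 ≤ T (n, j) + k) ∧ (∀ j, j < m → T (n, j) ≤ n + 1) ∧
      (∀ j, j + 1 < m → T (n, j) < T (n, j + 1)) := by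
  have hst := stair_entry (row_finite hk) hT hL
  have hmem : ∀ j, j < m → (n, j) ∈ SBF (fun i => if i = 0 then m else 0) k n :=
    fun j hj => (mem_row_of_ge hk le_rfl).2 ⟨rfl, hj⟩
  have hfinm := row_finite (n := n) (m := m) hk
  generalize hD : SBF (fun i => if i = 0 then m else 0) k n = D at *
  have hsub : ∀ q v, {p ∈ readUpTo D q | T p = v}.Finite := fun q v =>
    hfinm.subset fun p hp => hp.1.1
  have hlow1 : ∀ j, k ≤ j → j < n + k → j < m → j + 2 ≤ T (n, j) + k := by
    intro j h1 h2 h3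
    have h4 := hst (n - 1) (by omega) j (by omega) h2
    have h5 := hT.2.2.2 (n - 1) n j (by omega)
      (by rw [← hD, mem_SBF_of_lt (by dsimp only; omega)]; dsimp only; omega) (hmem j h3)
    omega
  -- Entries equal to `a - 1` that precede the foundation entry `a` all lie in the staircase.
  have hA : ∀ j, j < m → ∀ c, T (n, j) = c + 1 → 1 ≤ c →
      {p ∈ readUpTo D (n, j) | T p = c}.ncard ≤ n + 1 - c := by
    intro j hj c hc hc1
    rw [← diagCells_ncard (n := n) (k := k) (N := n) le_rfl hc1]
    refine Set.ncard_le_ncard ?_ (diagCells_finite le_rfl hc1)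
    rintro ⟨a, b⟩
    simp only [readUpTo, diagCells, Set.mem_ofPred_eq]
    rintro ⟨⟨hDp, hab⟩, hTp⟩
    rcases hab with h | ⟨h1, h2⟩
    · rw [← hD, mem_SBF_of_lt (by dsimp only; omega)] at hDp
      dsimp only at hDp
      have := hst a h b (by omega) (by omega)
      omega
    · subst h1
      have := hT.2.2.1 a j b h2 (hmem j hj) hDp
      omega
  have hdiag : ∀ j c, diagCells n k n (c + 1) ⊆ {p ∈ readUpTo D (n, j) | T p = c + 1} := by
    rintro j c ⟨a, b⟩ hp
    simp only [diagCells, Set.mem_ofPred_eq] at hp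
    have := hst a hp.1 b (by omega) (by omega)
    refine ⟨⟨?_, Or.inl hp.1⟩, by omega⟩
    rw [← hD, mem_SBF_of_lt (by dsimp only; omega)]
    dsimp only
    omega
  have hup : ∀ j, j < m → T (n, j) ≤ n + 1 := by
    intro j hj
    by_contra hcon
    obtain ⟨c, hc⟩ : ∃ c, T (n, j) = c + 1 := ⟨T (n, j) - 1, by omega⟩
    have hl := hL _ (hmem j hj) c (by omega)
    have h1 := hA j hj c hc (by omega)
    have h2 : 0 < {p ∈ readUpTo D (n, j) | T p = c + 1}.ncard :=
      (Set.ncard_pos (hsub _ _)).2 ⟨(n, j), ⟨hmem j hj, Or.inr ⟨rfl, le_rfl⟩⟩, hc⟩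
    omega
  have hstrict : ∀ j, j + 1 < m → 2 ≤ T (n, j + 1) → T (n, j) < T (n, j + 1) := by
    intro j hj h2
    have hle := hT.2.2.1 n j (j + 1) (by omega) (hmem j (by omega)) (hmem (j + 1) hj)
    by_contra hcon
    obtain ⟨c, hc⟩ : ∃ c, T (n, j) = c + 1 := ⟨T (n, j) - 1, by omega⟩
    have hl := hL _ (hmem j (by omega)) c (by omega)
    have h1 := hA j (by omega) c hc (by omega)
    have hB : insert (n, j) (insert (n, j + 1) (diagCells n k n (c + 1))) ⊆
        {p ∈ readUpTo D (n, j) | T p = c + 1} := by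
      rintro p (rfl | rfl | hp)
      · exact ⟨⟨hmem j (by omega), Or.inr ⟨rfl, le_rfl⟩⟩, hc⟩
      · exact ⟨⟨hmem (j + 1) hj, Or.inr ⟨rfl, by simp⟩⟩, by omega⟩
      · exact hdiag j c hp
    have hfd := diagCells_finite (n := n) (k := k) (v := c + 1) le_rfl (by omega)
    have hB' := Set.ncard_le_ncard hB (hsub _ _)
    rw [Set.ncard_insert_of_notMem (by simp [diagCells]) (hfd.insert _),
      Set.ncard_insert_of_notMem (by simp [diagCells]) hfd,
      diagCells_ncard le_rfl (by omega)] at hB'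
    have := hup j (by omega)
    omega
  have hlow : ∀ j, j < m → j + 2 ≤ T (n, j) + k := by
    intro j
    induction j with
    | zero =>
      intro hj
      rcases Nat.eq_zero_or_pos k with h | h
      · exact hlow1 0 (by omega) (by omega) hj
      · have := hT.1 _ (hmem 0 hj)
        omega
    | succ j ih =>
      intro hj
      have h1 := ih (by omega)
      rcases Nat.lt_or_ge (j + 1) (n + k) with h | h
      · exact hlow1 (j + 1) (by omega) h hj
      · have h3 := hT.2.2.1 n j (j + 1) (by omega) (hmem j (by omega)) (hmem (j + 1) hj)
        have := hstrict j hj (by omega)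
        omega
  refine ⟨hlow, hup, fun j hj => hstrict j hj ?_⟩
  have := hlow (j + 1) hj
  omega

/-! ### Turning the foundation row into a column -/

/-- The tableau obtained from `T` by rewriting the foundation row, left to right, as a column,
top to bottom. -/
def turnRow (n : ℕ) (T : ℕ × ℕ → ℕ) : ℕ × ℕ → ℕ := fun p =>
  if p.1 < n then T p else if p.2 = 0 then T (n, p.1 - n) else 0

theorem turnRow_of_lt {n : ℕ} {T : ℕ × ℕ → ℕ} {p : ℕ × ℕ} (h : p.1 < n) :
    turnRow n T p = T p := by
  simp [turnRow, h]

theorem turnRow_col (n : ℕ) (T : ℕ × ℕ → ℕ) (i : ℕ) : turnRow n T (n + i, 0) = T (n, i) := by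
  simp [turnRow]

theorem turnRow_isSSYT {n k m : ℕ} (hn : 1 ≤ n) (hk : k ≤ 1) {T : ℕ × ℕ → ℕ}
    (hT : IsSSYT (SBF (fun i => if i = 0 then m else 0) k n) T)
    (hL : IsLattice (SBF (fun i => if i = 0 then m else 0) k n) T) :
    IsSSYT (SBF (fun i => if i < m then 1 else 0) k n) (turnRow n T) := by
  obtain ⟨hlow, -, hs⟩ := row_entries hn hk hT hL
  have hst := stair_entry (row_finite hk) hT hL
  have hcol : ∀ i j, n ≤ i → (i, j) ∈ SBF (fun i => if i < m then 1 else 0) k n →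
      j = 0 ∧ ∃ t, t < m ∧ i = n + t := by
    intro i j hi h
    rw [mem_col_of_ge hk hi] at h
    exact ⟨h.1, i - n, by dsimp only at h; omega, by omega⟩
  have hmono : ∀ t s, s < t → t < m → T (n, s) < T (n, t) := by
    intro t
    induction t with
    | zero => omega
    | succ t ih =>
      intro s hst' ht
      have h1 := hs t ht
      rcases Nat.lt_or_ge s t with h | h
      · exact (ih s h (by omega)).trans h1
      · obtain rfl : s = t := by omega
        exact h1
  refine ⟨?_, ?_, ?_, ?_⟩
  · rintro ⟨i, j⟩ hp
    rcases lt_or_ge i n with h | h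
    · rw [turnRow_of_lt h]
      exact hT.1 _ ((mem_SBF_of_lt h).2 ((mem_SBF_of_lt h).1 hp))
    · obtain ⟨rfl, t, ht, rfl⟩ := hcol _ _ h hp
      rw [turnRow_col]
      have := hlow t ht
      omega
  · rintro ⟨i, j⟩ hp
    rcases lt_or_ge i n with h | h
    · rw [turnRow_of_lt h]
      exact hT.2.1 _ fun h' => hp ((mem_SBF_of_lt h).2 ((mem_SBF_of_lt h).1 h'))
    · rw [mem_col_of_ge hk h] at hp
      simp only [turnRow, not_lt.2 h, if_false]
      split_ifs with hj
      · refine hT.2.1 _ fun h' => hp ?_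
        have h'' := (mem_row_of_ge (p := (n, i - n)) hk le_rfl).1 h'
        dsimp only at h'' hj ⊢
        omega
      · rfl
  · intro i j1 j2 hj h1 h2
    rcases lt_or_ge i n with h | h
    · rw [turnRow_of_lt h, turnRow_of_lt h]
      exact hT.2.2.1 i j1 j2 hj ((mem_SBF_of_lt h).2 ((mem_SBF_of_lt h).1 h1))
        ((mem_SBF_of_lt h).2 ((mem_SBF_of_lt h).1 h2))
    · obtain ⟨rfl, -⟩ := hcol _ _ h h1
      obtain ⟨rfl, -⟩ := hcol _ _ h h2
      exact le_rfl
  · intro i1 i2 j hi h1 h2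
    rcases lt_or_ge i2 n with h | h
    · have h' : i1 < n := hi.trans h
      rw [turnRow_of_lt (p := (i2, j)) h, turnRow_of_lt (p := (i1, j)) h']
      exact hT.2.2.2 i1 i2 j hi ((mem_SBF_of_lt h').2 ((mem_SBF_of_lt h').1 h1))
        ((mem_SBF_of_lt h).2 ((mem_SBF_of_lt h).1 h2))
    · obtain ⟨rfl, t, ht, rfl⟩ := hcol _ _ h h2
      rw [turnRow_col]
      rcases lt_or_ge i1 n with h' | h'
      · -- Column `0` meets the staircase only for `k = 0`, in a single cell with entry `1`.
        rw [turnRow_of_lt h']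
        rw [mem_SBF_of_lt h'] at h1
        dsimp only at h1
        have := hst i1 h' 0 (by omega) (by omega)
        have := hlow t ht
        omega
      · obtain ⟨-, s, hs', rfl⟩ := hcol _ _ h' h1
        rw [turnRow_col]
        exact hmono t s (by omega) ht

theorem turnRow_isLattice {n k m : ℕ} (hn : 1 ≤ n) (hk : k ≤ 1) {T : ℕ × ℕ → ℕ}
    (hT : IsSSYT (SBF (fun i => if i = 0 then m else 0) k n) T)
    (hL : IsLattice (SBF (fun i => if i = 0 then m else 0) k n) T) :
    IsLattice (SBF (fun i => if i < m then 1 else 0) k n) (turnRow n T) := by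
  obtain ⟨-, hup, -⟩ := row_entries hn hk hT hL
  have hst := stair_entry (row_finite hk) hT hL
  have hS := turnRow_isSSYT hn hk hT hL
  rintro ⟨i, j⟩ hq v hv
  rcases lt_or_ge i n with h | h
  · have key : ∀ w, {p ∈ readUpTo (SBF (fun i => if i < m then 1 else 0) k n) (i, j) |
          turnRow n T p = w} =
        {p ∈ readUpTo (SBF (fun i => if i = 0 then m else 0) k n) (i, j) | T p = w} := by
      intro w
      ext p
      simp only [readUpTo, Set.mem_ofPred_eq]
      by_cases hp : p.1 < n
      · rw [turnRow_of_lt hp, mem_SBF_of_lt hp, mem_SBF_of_lt hp]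
      · have h1 : ¬ p.1 < i := by omega
        have h2 : ¬ p.1 = i := by omega
        simp [h1, h2]
    rw [key, key]
    exact hL (i, j) ((mem_SBF_of_lt h).2 ((mem_SBF_of_lt h).1 hq)) v hv
  · have hfin : ∀ w, {p ∈ readUpTo (SBF (fun i => if i < m then 1 else 0) k n) (i, j) |
        turnRow n T p = w}.Finite := fun w => (col_finite hk).subset fun p hp => hp.1.1
    have hlo : n + 1 - v ≤ {p ∈ readUpTo (SBF (fun i => if i < m then 1 else 0) k n) (i, j) |
        turnRow n T p = v}.ncard := by
      rw [← diagCells_ncard (n := n) (k := k) (N := n) le_rfl hv]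
      refine Set.ncard_le_ncard ?_ (hfin _)
      rintro ⟨a, b⟩ hp
      simp only [diagCells, Set.mem_ofPred_eq] at hp
      have := hst a hp.1 b (by omega) (by omega)
      refine ⟨⟨(mem_SBF_of_lt hp.1).2 ⟨by dsimp only; omega, by dsimp only; omega⟩,
        Or.inl (by dsimp only; omega)⟩, ?_⟩
      rw [turnRow_of_lt hp.1]
      omega
    -- The column is strict, so at most one of its cells carries the entry `v + 1`.
    by_cases hex : ∃ t, t < m ∧ T (n, t) = v + 1
    · obtain ⟨t, ht, htv⟩ := hex
      have hle := hup t ht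
      have hsub : {p ∈ readUpTo (SBF (fun i => if i < m then 1 else 0) k n) (i, j) |
          turnRow n T p = v + 1} ⊆ insert (n + t, 0) (diagCells n k n (v + 1)) := by
        rintro ⟨a, b⟩ ⟨⟨hD, -⟩, hp⟩
        rcases lt_or_ge a n with ha | ha
        · right
          rw [turnRow_of_lt ha] at hp
          rw [mem_SBF_of_lt ha] at hD
          dsimp only at hD
          have := hst a ha b (by omega) (by omega)
          simp only [diagCells, Set.mem_ofPred_eq]
          omega
        · left
          have hD' := (mem_col_of_ge hk ha).1 hD
          dsimp only at hD'
          obtain ⟨rfl, hD2⟩ := hD'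
          have ht' : (n + t, 0) ∈ SBF (fun i => if i < m then 1 else 0) k n :=
            (mem_col_of_ge hk (by simp)).2 ⟨rfl, by simpa using ht⟩
          have htv' := turnRow_col n T t
          rcases lt_trichotomy a (n + t) with hlt | heq | hlt
          · have := hS.2.2.2 _ _ 0 hlt hD ht'
            omega
          · rw [heq]
          · have := hS.2.2.2 _ _ 0 hlt ht' hD
            omega
      have h1 := Set.ncard_le_ncard hsub ((diagCells_finite le_rfl (by omega)).insert _)
      have h2 := Set.ncard_insert_le (n + t, 0) (diagCells n k n (v + 1))
      rw [diagCells_ncard le_rfl (by omega)] at h2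
      omega
    · have hsub : {p ∈ readUpTo (SBF (fun i => if i < m then 1 else 0) k n) (i, j) |
          turnRow n T p = v + 1} ⊆ diagCells n k n (v + 1) := by
        rintro ⟨a, b⟩ ⟨⟨hD, -⟩, hp⟩
        rcases lt_or_ge a n with ha | ha
        · rw [turnRow_of_lt ha] at hp
          rw [mem_SBF_of_lt ha] at hD
          dsimp only at hD
          have := hst a ha b (by omega) (by omega)
          simp only [diagCells, Set.mem_ofPred_eq]
          omega
        · have hD' := (mem_col_of_ge hk ha).1 hD
          dsimp only at hD'
          obtain ⟨rfl, hD2⟩ := hD'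
          obtain ⟨t, rfl⟩ := Nat.exists_eq_add_of_le ha
          rw [turnRow_col] at hp
          exact absurd ⟨t, by omega, hp⟩ hex
      have h1 := Set.ncard_le_ncard hsub (diagCells_finite le_rfl (by omega))
      rw [diagCells_ncard le_rfl (by omega)] at h1
      omega

theorem turnRow_content {n k m : ℕ} (hk : k ≤ 1) (T : ℕ × ℕ → ℕ) (v : ℕ) :
    contentOf (SBF (fun i => if i < m then 1 else 0) k n) (turnRow n T) v =
      contentOf (SBF (fun i => if i = 0 then m else 0) k n) T v := by
  unfold contentOf
  symm
  refine Set.ncard_congr (fun p _ => if p.1 < n then p else (n + p.2, 0)) ?_ ?_ ?_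
  · rintro ⟨a, b⟩ ⟨hD, hv⟩
    rcases lt_or_ge a n with h | h
    · simp only [h, if_true]
      exact ⟨(mem_SBF_of_lt h).2 ((mem_SBF_of_lt h).1 hD), by rw [turnRow_of_lt h]; exact hv⟩
    · simp only [not_lt.2 h, if_false]
      rw [mem_row_of_ge hk h] at hD
      dsimp only at hD
      obtain ⟨rfl, hb⟩ := hD
      exact ⟨(mem_col_of_ge hk (by simp)).2 ⟨rfl, by simpa using hb⟩,
        by rw [turnRow_col]; exact hv⟩
  · rintro ⟨a, b⟩ ⟨a', b'⟩ ⟨hD, -⟩ ⟨hD', -⟩ heq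
    rcases lt_or_ge a n with h | h <;> rcases lt_or_ge a' n with h' | h'
    · simpa [h, h'] using heq
    · simp only [h, not_lt.2 h', if_true, if_false, Prod.mk.injEq] at heq
      omega
    · simp only [h', not_lt.2 h, if_true, if_false, Prod.mk.injEq] at heq
      omega
    · rw [mem_row_of_ge hk h] at hD
      rw [mem_row_of_ge hk h'] at hD'
      simp only [not_lt.2 h, not_lt.2 h', if_false, Prod.mk.injEq] at heq
      dsimp only at hD hD'
      ext <;> dsimp only <;> omega
  · rintro ⟨a, b⟩ ⟨hD, hv⟩
    rcases lt_or_ge a n with h | h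
    · rw [turnRow_of_lt h] at hv
      exact ⟨(a, b), ⟨(mem_SBF_of_lt h).2 ((mem_SBF_of_lt h).1 hD), hv⟩, by simp [h]⟩
    · have hD' := (mem_col_of_ge hk h).1 hD
      dsimp only at hD'
      obtain ⟨rfl, hD2⟩ := hD'
      obtain ⟨t, rfl⟩ := Nat.exists_eq_add_of_le h
      rw [turnRow_col] at hv
      exact ⟨(n, t), ⟨(mem_row_of_ge hk le_rfl).2 ⟨rfl, by dsimp only; omega⟩, hv⟩, by simp⟩

theorem turnRow_inj {n k m : ℕ} (hk : k ≤ 1) {T S : ℕ × ℕ → ℕ}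
    (hT : IsSSYT (SBF (fun i => if i = 0 then m else 0) k n) T)
    (hS : IsSSYT (SBF (fun i => if i = 0 then m else 0) k n) S)
    (h : turnRow n T = turnRow n S) : T = S := by
  funext p
  by_cases hp : p ∈ SBF (fun i => if i = 0 then m else 0) k n
  · rcases lt_or_ge p.1 n with hlt | hge
    · rw [← turnRow_of_lt (T := T) hlt, h, turnRow_of_lt hlt]
    · obtain ⟨a, b⟩ := p
      rw [mem_row_of_ge hk hge] at hp
      dsimp only at hp
      obtain ⟨rfl, -⟩ := hp
      rw [← turnRow_col _ T, h, turnRow_col]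
  · rw [hT.2.1 p hp, hS.2.1 p hp]

/-- Tableaux of a finite shape with prescribed content form a finite set: the content
determines the set of values taken. -/
theorem LR_finite {D : Set (ℕ × ℕ)} (hD : D.Finite) (nu : ℕ → ℕ) :
    {T : ℕ × ℕ → ℕ | IsSSYT D T ∧ IsLattice D T ∧
      ∀ v, 1 ≤ v → contentOf D T v = nu v}.Finite := by
  rcases Set.eq_empty_or_nonempty {T : ℕ × ℕ → ℕ | IsSSYT D T ∧ IsLattice D T ∧
      ∀ v, 1 ≤ v → contentOf D T v = nu v} with h | ⟨T₀, -, -, hc₀⟩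
  · rw [h]; exact Set.finite_empty
  have : Finite D := hD
  refine Set.Finite.of_finite_image (f := fun T (p : D) => T p) ?_ ?_
  · refine (Set.Finite.pi' (fun _ : D => hD.image T₀)).subset ?_
    rintro _ ⟨T, ⟨hT, -, hc⟩, rfl⟩ p
    have hpos := hT.1 p p.2
    have h1 : 0 < contentOf D T (T p) :=
      (Set.ncard_pos (hD.subset fun _ h => h.1)).2 ⟨p, p.2, rfl⟩
    rw [hc _ hpos, ← hc₀ _ hpos] at h1
    obtain ⟨q, hq, hqv⟩ := (Set.ncard_pos (hD.subset fun _ h => h.1)).1 h1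
    exact ⟨q, hq, hqv⟩
  · rintro T ⟨hT, -⟩ S ⟨hS, -⟩ heq
    funext p
    by_cases hp : p ∈ D
    · exact congrFun heq ⟨p, hp⟩
    · rw [hT.2.1 p hp, hS.2.1 p hp]

/-- Let `n ≥ 1`, `0 ≤ k ≤ 1`, and let `λ = (m)` be a
partition with a single part, `m ≤ k + n`.  Then `s_{𝒮(λᵗ,k,n)} - s_{𝒮(λ,k,n)}`
is Schur-positive: by the Littlewood-Richardson rule, this says that for every
content `ν` the LR coefficient of `s_ν` in `s_{𝒮(λ,k,n)}` is at most the one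
in `s_{𝒮(λᵗ,k,n)}` (here `λᵗ = (1^m)` is the transpose of `λ`). -/
theorem singleRow_transpose_diff_schurPositive
    (n k m : ℕ) (hn : 1 ≤ n) (hk : k ≤ 1) (hm : 1 ≤ m) (hmn : m ≤ k + n) :
    ∀ nu : ℕ → ℕ,
      LRcount (SBF (fun i => if i = 0 then m else 0) k n) nu ≤
      LRcount (SBF (fun i => if i < m then 1 else 0) k n) nu := by
  intro nu
  refine Set.ncard_le_ncard_of_injOn (turnRow n) ?_ ?_ (LR_finite (col_finite hk) nu)
  · rintro T ⟨hT, hL, hc⟩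
    exact ⟨turnRow_isSSYT hn hk hT hL, turnRow_isLattice hn hk hT hL,
      fun v hv => (turnRow_content hk T v).trans (hc v hv)⟩
  · rintro T ⟨hT, -⟩ S ⟨hS, -⟩ h
    exact turnRow_inj hk hT hS h
end

section
/- Let n be a positive integer, let 0 ≤ k ≤ 1, and let λ be a partition with a single part satisfying λ_1 ≤ k+n. Then the skew Schur functions s_{S(λ^t,k,n)} and s_{S(λ,k,n)} become equal upon restricting to n+1 variables, i.e. after setting x_{n+2} = x_{n+3} = ⋯ = 0. -/
namespace StaircaseFoundation

open Finset

/-! ### Alternants and their branching rules -/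

/-- Column reduction of a determinant `det (f_j (y_i))`. If a combination `a_j f_j - b_j f_{j+1}` of
neighbouring columns is divisible by `x - y_r`, with quotient `g_j`, then after the column operations
only the last entry of row `r` survives, and the expansion along that row is the claim. -/
theorem det_branch {R : Type*} [CommRing R] (N : ℕ) (r : Fin (N + 1)) (y : Fin (N + 1) → R)
    (f : Fin (N + 1) → R → R) (g : Fin N → R → R) (a b : Fin N → R)
    (h : ∀ j x, (x - y r) * g j x = a j * f j.castSucc x - b j * f j.succ x) :
    (∏ j, a j) * (Matrix.of fun i j => f j (y i)).det =
      (-1) ^ ((r : ℕ) + N) * f (Fin.last N) (y r) * ((∏ i, (y (r.succAbove i) - y r)) *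
        (Matrix.of fun i j => g j (y (r.succAbove i))).det) := by
  set A : Matrix (Fin (N + 1)) (Fin (N + 1)) R := Matrix.of fun i j => f j (y i) with hA
  let U : Matrix (Fin (N + 1)) (Fin (N + 1)) R := Matrix.of fun k j =>
    Fin.lastCases (motive := fun _ => R) (if k = Fin.last N then 1 else 0)
      (fun j' => if k = j'.castSucc then a j' else if k = j'.succ then -b j' else 0) j
  have hUl : ∀ k, U k (Fin.last N) = if k = Fin.last N then 1 else 0 := by
    intro k; simp [U]
  have hUc : ∀ k j, U k (Fin.castSucc j) =
      if k = j.castSucc then a j else if k = j.succ then -b j else 0 := by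
    intro k j; simp [U]
  have hdetU : U.det = ∏ j, a j := by
    rw [Matrix.det_of_isLowerTriangular, Fin.prod_univ_castSucc]
    · simp [hUl, hUc]
    · intro i j hij
      have hij : i < j := hij
      induction j using Fin.lastCases with
      | last => rw [hUl, if_neg (ne_of_lt hij)]
      | cast j =>
        rw [hUc, if_neg (ne_of_lt hij), if_neg]
        rintro rfl
        exact absurd hij (not_lt.2 (Fin.castSucc_lt_succ).le)
  have hAUc : ∀ i j, (A * U) i (Fin.castSucc j) = (y i - y r) * g j (y i) := by
    intro i j
    rw [Matrix.mul_apply, h]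
    simp only [hUc]
    rw [Finset.sum_eq_add (Fin.castSucc j) (Fin.succ j) (Fin.castSucc_lt_succ).ne]
    · simp [hA, (Fin.castSucc_lt_succ (i := j)).ne']; ring
    · intro c _ hc; simp [hc.1, hc.2]
    · simp
    · simp
  have hAUl : ∀ i, (A * U) i (Fin.last N) = f (Fin.last N) (y i) := by
    intro i
    rw [Matrix.mul_apply]
    simp [hUl, hA]
  rw [← hdetU, mul_comm, ← Matrix.det_mul, Matrix.det_succ_row _ r, Fin.sum_univ_castSucc]
  rw [Finset.sum_eq_zero, zero_add, hAUl, Fin.val_last, ← Matrix.det_mul_column]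
  · congr 2
    ext i j
    simp [hAUc]
  · intro j _
    rw [hAUc]; simp

/-- The alternant `a_{λ+ρ}(y_0, …, y_{N-1})`, with `ρ = (N-1, …, 1, 0)`. Only the first `N` parts
of `lam` enter, so `alt y N 0` is the Vandermonde determinant. -/
def alt {R : Type*} [CommRing R] (y : ℕ → R) (N : ℕ) (lam : ℕ → ℕ) : R :=
  (Matrix.of fun i j : Fin N => y i ^ (lam j + (N - 1 - j))).det

theorem alt_zero_succ {R : Type*} [CommRing R] (y : ℕ → R) (N : ℕ) :
    alt y (N + 1) 0 = (∏ i : Fin N, (y i - y N)) * alt y N 0 := by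
  have := det_branch N (Fin.last N) (fun i => y i) (fun j x => x ^ (N - j : ℕ))
    (fun j x => x ^ (N - 1 - j : ℕ)) (fun _ => 1) (fun _ => y N) (by
      intro j x
      have : N - (j : ℕ) = (N - 1 - j) + 1 := by omega
      simp only [Fin.val_castSucc, Fin.val_succ, Fin.val_last]
      rw [this, show N - (j + 1 : ℕ) = N - 1 - j by omega]
      ring)
  simpa [alt, ← two_mul] using this

theorem alt_zero_succ' {R : Type*} [CommRing R] (y : ℕ → R) (N : ℕ) :
    alt y (N + 1) 0 = (-1) ^ N * ((∏ i : Fin N, (y (i + 1) - y 0)) *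
      alt (fun i => y (i + 1)) N 0) := by
  have := det_branch N 0 (fun i => y i) (fun j x => x ^ (N - j : ℕ))
    (fun j x => x ^ (N - 1 - j : ℕ)) (fun _ => 1) (fun _ => y 0) (by
      intro j x
      have : N - (j : ℕ) = (N - 1 - j) + 1 := by omega
      simp only [Fin.val_castSucc, Fin.val_succ, Fin.val_zero]
      rw [this, show N - (j + 1 : ℕ) = N - 1 - j by omega]
      ring)
  simpa [alt] using this

theorem alt_zero_ne {R : Type*} [CommRing R] [IsDomain R] (y : ℕ → R) (N : ℕ)
    (hy : ∀ i j, i < N → j < N → y i = y j → i = j) : alt y N 0 ≠ 0 := by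
  induction N with
  | zero => simp [alt]
  | succ N ih =>
    rw [alt_zero_succ]
    refine mul_ne_zero (prod_ne_zero_iff.2 fun i _ => sub_ne_zero.2 fun h => ?_)
      (ih fun i j hi hj => hy i j (by omega) (by omega))
    have := hy i N (by omega) (by omega) h
    omega

/-- A length-`N` sequence of parts as an infinite sequence, extended by zero. -/
def ext0 {N : ℕ} (mu : Fin N → ℕ) : ℕ → ℕ := fun i => if h : i < N then mu ⟨i, h⟩ else 0

@[simp] theorem ext0_val {N : ℕ} (mu : Fin N → ℕ) (i : Fin N) : ext0 mu i = mu i := by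
  simp [ext0]

/-- The sequences `μ` with `λ_{i+1} ≤ μ_i ≤ λ_i` for `i < N`, i.e. the shapes left in the first `N`
rows after removing a horizontal strip from `λ`. -/
def inter (N : ℕ) (lam : ℕ → ℕ) : Finset (Fin N → ℕ) :=
  Fintype.piFinset fun i => Icc (lam (i + 1)) (lam i)

theorem det_sum_cols {R : Type*} [CommRing R] {N : ℕ} (S : Fin N → Finset ℕ)
    (F : Fin N → ℕ → Fin N → R) :
    (Matrix.of fun i j : Fin N => ∑ m ∈ S j, F j m i).det =
      ∑ mu ∈ Fintype.piFinset S, (Matrix.of fun i j => F j (mu j) i).det := by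
  rw [← Matrix.det_transpose]
  have := (Matrix.detRowAlternating (n := Fin N) (R := R)).toMultilinearMap.map_sum_finset
    (fun j m => F j m) S
  simp only [AlternatingMap.coe_multilinearMap] at this
  convert this using 2
  · change _ = Matrix.det (fun i => ∑ j ∈ S i, F i j)
    congr 1
    ext i j
    simp [Matrix.transpose]
  · rename_i mu hmu
    rw [← Matrix.det_transpose]; rfl

/-- A finite geometric sum, in the form needed for the branching of alternants. -/
theorem geom_icc {R : Type*} [CommRing R] (x z : R) (a b : ℕ) (hab : a ≤ b) :
    (x - z) * ∑ m ∈ Icc a b, z ^ (b - m) * x ^ m = x ^ (b + 1) - z ^ (b - a + 1) * x ^ a := by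
  induction b, hab using Nat.le_induction with
  | base => simp; ring
  | succ b hb ih =>
    rw [← Finset.insert_Icc_right_eq_Icc_add_one (by omega), sum_insert (by simp)]
    have : ∑ m ∈ Icc a b, z ^ (b + 1 - m) * x ^ m = z * ∑ m ∈ Icc a b, z ^ (b - m) * x ^ m := by
      rw [mul_sum]
      refine sum_congr rfl fun m hm => ?_
      rw [show b + 1 - m = b - m + 1 by have := (mem_Icc.1 hm).2; omega]; ring
    rw [this, mul_add, mul_left_comm (x - z) z, ih, show b + 1 - a + 1 = b - a + 1 + 1 by omega]
    simp; ring

/-- The branching rule for alternants, which removes the last variable `y N`. -/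
theorem alt_branch {R : Type*} [CommRing R] (y : ℕ → R) (N : ℕ) (lam : ℕ → ℕ)
    (hl : ∀ i, lam (i + 1) ≤ lam i) :
    alt y (N + 1) lam = (∏ i : Fin N, (y i - y N)) *
      ∑ mu ∈ inter N lam, y N ^ lam N * (∏ i : Fin N, y N ^ (lam i - mu i)) * alt y N (ext0 mu) := by
  have := det_branch N (Fin.last N) (fun i => y i) (fun j x => x ^ (lam j + (N - j) : ℕ))
    (fun j x => ∑ m ∈ Icc (lam (j + 1)) (lam j), y N ^ (lam j - m) * x ^ (m + (N - 1 - j)))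
      (fun _ => 1) (fun j => y N ^ (lam j - lam (j + 1) + 1)) (by
      intro j x
      have h1 : N - (j : ℕ) = (N - 1 - j) + 1 := by omega
      simp only [Fin.val_castSucc, Fin.val_succ, Fin.val_last, pow_add _ _ (N - 1 - (j : ℕ)),
        ← mul_assoc]
      rw [← sum_mul, ← mul_assoc, geom_icc _ _ _ _ (hl j), h1,
        show N - (j + 1 : ℕ) = N - 1 - j by omega]
      ring)
  rw [det_sum_cols] at this
  simp only [prod_const_one, one_mul, Fin.val_last, ← two_mul, pow_mul, neg_one_sq, one_pow,
    Nat.sub_self, add_zero] at this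
  rw [alt, Nat.add_sub_cancel, this, mul_left_comm, inter]
  simp only [Fin.succAbove_last, Fin.val_castSucc]
  congr 1
  rw [mul_sum]
  refine sum_congr rfl fun mu _ => ?_
  rw [mul_assoc]
  congr 1
  rw [alt]
  simp only [ext0_val]
  exact Matrix.det_mul_row (fun j : Fin N => y N ^ (lam j - mu j))
    (Matrix.of fun i j : Fin N => y i ^ (mu j + (N - 1 - j)))

/-- The alternant of `λ` in which every column but the first carries the extra factor `s + y_i`.
It is the numerator of the bialternant formula for `cornerSum`. -/
def altG {R : Type*} [CommRing R] (y : ℕ → R) (s : R) (N : ℕ) (lam : ℕ → ℕ) : R :=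
  (Matrix.of fun i j : Fin N =>
    (if (j : ℕ) = 0 then 1 else s + y i) * y i ^ (lam j + (N - 1 - j))).det

/-- The branching rule for `altG`. In the first column the quotient by `x - y N` contains the factor
`s` in the term `μ_0 = λ_0` and the factor `s + x` in all others, which accounts for the two cases. The
column operation multiplies the first column by `s + y N`, hence this factor on both sides. -/
theorem altG_branch {R : Type*} [CommRing R] (y : ℕ → R) (s : R) (N : ℕ) (hN : 0 < N)
    (lam : ℕ → ℕ) (hl : ∀ i, lam (i + 1) ≤ lam i) :
    (s + y N) * altG y s (N + 1) lam = (s + y N) * ((∏ i : Fin N, (y i - y N)) *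
      ∑ mu ∈ inter N lam, y N ^ lam N * (∏ i : Fin N, y N ^ (lam i - mu i)) *
        (if ext0 mu 0 = lam 0 then s * altG y s N (ext0 mu)
          else (∏ i : Fin N, (s + y i)) * alt y N (ext0 mu))) := by
  have := det_branch N (Fin.last N) (fun i => y i)
    (fun j x => (if (j : ℕ) = 0 then 1 else s + x) * x ^ (lam j + (N - j) : ℕ))
    (fun j x => ∑ m ∈ Icc (lam (j + 1)) (lam j), y N ^ (lam j - m) *
      ((if (j : ℕ) = 0 ∧ m = lam j then s else s + x) * x ^ (m + (N - 1 - j))))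
      (fun j => if (j : ℕ) = 0 then s + y N else 1)
      (fun j => y N ^ (lam j - lam (j + 1) + 1)) (by
      intro j x
      have h1 : N - (j : ℕ) = (N - 1 - j) + 1 := by omega
      have h2 : ∑ m ∈ Icc (lam (j + 1)) (lam j), y N ^ (lam j - m) *
          ((if (j : ℕ) = 0 ∧ m = lam j then s else s + x) * x ^ (m + (N - 1 - j))) =
          ((s + x) * ∑ m ∈ Icc (lam (j + 1)) (lam j), y N ^ (lam j - m) * x ^ m
            - if (j : ℕ) = 0 then x ^ (lam j + 1) else 0) * x ^ (N - 1 - j : ℕ) := by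
        have h3 : ∀ m ∈ Icc (lam (j + 1)) (lam j), y N ^ (lam j - m) *
          ((if (j : ℕ) = 0 ∧ m = lam j then s else s + x) * x ^ (m + (N - 1 - j))) =
          ((s + x) * (y N ^ (lam j - m) * x ^ m) -
            if m = lam j then (if (j : ℕ) = 0 then x ^ (lam j + 1) else 0) else 0) *
            x ^ (N - 1 - j : ℕ) := by
          intro m _
          by_cases hm : m = lam j
          · by_cases hj : (j : ℕ) = 0 <;> simp [hj, hm, pow_add] <;> ring
          · rw [if_neg (fun h => hm h.2), if_neg hm, pow_add]
            ring
        rw [sum_congr rfl h3, ← sum_mul, sum_sub_distrib, ← mul_sum, sum_ite_eq',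
          if_pos (mem_Icc.2 ⟨hl j, le_rfl⟩)]
      have h4 := geom_icc x (y N) _ _ (hl j)
      rw [h2]
      simp only [Fin.val_castSucc, Fin.val_succ, Fin.val_last]
      rw [← mul_assoc, mul_sub, mul_left_comm, h4, h1,
        show N - (j + 1 : ℕ) = N - 1 - j by omega]
      by_cases hj : (j : ℕ) = 0 <;> simp [hj] <;> ring)
  rw [det_sum_cols] at this
  obtain ⟨M, rfl⟩ : ∃ M, N = M + 1 := ⟨N - 1, by omega⟩
  rw [Fin.prod_univ_succ] at this
  simp only [prod_const_one, one_mul, Fin.val_last, ← two_mul, pow_mul, neg_one_sq, one_pow,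
    Nat.sub_self, add_zero, Fin.val_zero, if_true, Fin.val_succ, Nat.add_eq_zero_iff, one_ne_zero,
    and_false, if_false, mul_one, Fin.succAbove_last, Fin.val_castSucc] at this
  rw [altG, Nat.add_sub_cancel, this, mul_assoc]
  congr 1
  rw [mul_left_comm, inter]
  congr 1
  rw [mul_sum]
  refine sum_congr rfl fun mu _ => ?_
  rw [mul_assoc]
  congr 1
  refine (Matrix.det_mul_row (fun j : Fin (M + 1) => y (M + 1) ^ (lam j - mu j))
    (Matrix.of fun i j : Fin (M + 1) => (if (j : ℕ) = 0 ∧ mu j = lam j then s else s + y i) *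
      y i ^ (mu j + (M + 1 - 1 - j)))).trans ?_
  congr 1
  have hmu : ext0 mu 0 = mu 0 := ext0_val mu 0
  split_ifs with h
  · rw [altG]
    have := Matrix.det_mul_row (fun j : Fin (M + 1) => if (j : ℕ) = 0 then s else 1)
      (Matrix.of fun i j : Fin (M + 1) => (if (j : ℕ) = 0 then 1 else s + y i) *
        y i ^ (mu j + (M + 1 - 1 - j)))
    rw [Fin.prod_univ_succ] at this
    simp only [Fin.val_zero, if_true, Fin.val_succ, Nat.add_eq_zero_iff, one_ne_zero,
      and_false, if_false, prod_const_one, mul_one] at this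
    simp only [ext0_val]
    rw [← this]
    congr 1
    ext i j
    rw [Matrix.of_apply, Matrix.of_apply, Matrix.of_apply]
    by_cases hj : (j : ℕ) = 0
    · have hj' : j = 0 := Fin.ext hj
      subst hj'
      simp [← hmu, h]
    · simp [hj]
  · rw [alt, ← Matrix.det_mul_column]
    congr 1
    ext i j
    rw [Matrix.of_apply, Matrix.of_apply, Matrix.of_apply, ext0_val, if_neg]
    rintro ⟨hj, h'⟩
    have hj' : j = 0 := Fin.ext hj
    subst hj'
    exact h (by rw [hmu, h', Fin.val_zero])

/-! ### Tableaux and removal of the largest letter -/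

/-- `T` is a semistandard tableau of straight shape `lam` with letters `0, …, N-1`. Outside the
shape `T` takes the value `N`, so that `T i j < N` characterizes the cells, and rows are weakly
increasing on all of `ℕ`. -/
def IsTab (N : ℕ) (lam : ℕ → ℕ) (T : ℕ → ℕ → ℕ) : Prop :=
  (∀ i j, T i j ≤ T i (j + 1)) ∧ (∀ i j, T i j < N → T i j < T (i + 1) j) ∧
  (∀ i j, T i j ≤ N) ∧ ∀ i j, T i j < N ↔ j < lam i

theorem lam_zero_of_le {N : ℕ} {lam : ℕ → ℕ} (hl : ∀ i, lam (i + 1) ≤ lam i) (h0 : lam N = 0)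
    {i : ℕ} (hi : N ≤ i) : lam i = 0 := by
  have := antitone_nat_of_succ_le hl hi
  omega

theorem finite_isTab {N : ℕ} {lam : ℕ → ℕ} (hl : ∀ i, lam (i + 1) ≤ lam i) (h0 : lam N = 0) :
    {T | IsTab N lam T}.Finite := by
  let F : (ℕ → ℕ → ℕ) → (Fin N × Fin (lam 0) → Fin (N + 1)) := fun T p =>
    ⟨min (T p.1 p.2) N, by omega⟩
  refine Set.Finite.of_finite_image (f := F) (Set.toFinite _) ?_
  intro T hT T' hT' h
  obtain ⟨-, -, h3, h4⟩ := hT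
  obtain ⟨-, -, h3', h4'⟩ := hT'
  funext i j
  by_cases hj : j < lam i
  · have hi : i < N := by
      by_contra hi
      have := lam_zero_of_le hl h0 (not_lt.1 hi)
      omega
    have hj0 : j < lam 0 := lt_of_lt_of_le hj (antitone_nat_of_succ_le hl (Nat.zero_le i))
    have := congrArg Fin.val (congrFun h (⟨i, hi⟩, ⟨j, hj0⟩))
    simp only [F] at this
    have := h3 i j
    have := h3' i j
    omega
  · have := h3 i j
    have := h3' i j
    have := h4 i j
    have := h4' i j
    omega

open Classical in
/-- The finite set of tableaux `IsTab N lam`; it is given the junk value `∅` if there are infinitely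
many, which is excluded when `lam` is antitone with at most `N` nonzero parts. -/
noncomputable def tabs (N : ℕ) (lam : ℕ → ℕ) : Finset (ℕ → ℕ → ℕ) :=
  if h : {T | IsTab N lam T}.Finite then h.toFinset else ∅

theorem mem_tabs {N : ℕ} {lam : ℕ → ℕ} (hl : ∀ i, lam (i + 1) ≤ lam i) (h0 : lam N = 0)
    {T : ℕ → ℕ → ℕ} : T ∈ tabs N lam ↔ IsTab N lam T := by
  simp [tabs, finite_isTab hl h0]

theorem IsTab.mono {N : ℕ} {lam : ℕ → ℕ} {T : ℕ → ℕ → ℕ} (h : IsTab N lam T) (i : ℕ) :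
    Monotone (T i) := monotone_nat_of_le_succ (h.1 i)

theorem ext0_le {N : ℕ} {lam : ℕ → ℕ} {mu : Fin N → ℕ} (hmu : mu ∈ inter N lam) (i : ℕ) :
    ext0 mu i ≤ lam i := by
  rw [inter, Fintype.mem_piFinset] at hmu
  by_cases h : i < N
  · simpa [ext0, h] using (mem_Icc.1 (hmu ⟨i, h⟩)).2
  · simp [ext0, h]

theorem le_ext0 {N : ℕ} {lam : ℕ → ℕ} {mu : Fin N → ℕ} (hmu : mu ∈ inter N lam) {i : ℕ}
    (hi : i < N) : lam (i + 1) ≤ ext0 mu i := by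
  rw [inter, Fintype.mem_piFinset] at hmu
  simpa [ext0, hi] using (mem_Icc.1 (hmu ⟨i, hi⟩)).1

theorem ext0_N {N : ℕ} (mu : Fin N → ℕ) {i : ℕ} (hi : N ≤ i) : ext0 mu i = 0 := by
  simp [ext0, not_lt.2 hi]

theorem ext0_anti {N : ℕ} {lam : ℕ → ℕ} {mu : Fin N → ℕ} (hmu : mu ∈ inter N lam) (i : ℕ) :
    ext0 mu (i + 1) ≤ ext0 mu i := by
  by_cases h : i < N
  · exact (ext0_le hmu _).trans (le_ext0 hmu h)
  · rw [ext0_N mu (by omega : N ≤ i + 1)]; exact Nat.zero_le _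

/-- Enlarge a tableau with letters `< N` to one of shape `lam` with letters `≤ N`, by writing `N` in
the remaining cells of `lam`. -/
def extendT (N : ℕ) (lam : ℕ → ℕ) (T : ℕ → ℕ → ℕ) : ℕ → ℕ → ℕ := fun i j =>
  if T i j < N then T i j else if j < lam i then N else N + 1

/-- Removing the largest letter `N` from a tableau leaves a tableau whose shape interlaces with
`lam`, and this is a bijection. -/
theorem tab_branch {R : Type*} [CommRing R] {N : ℕ} {lam : ℕ → ℕ}
    (hl : ∀ i, lam (i + 1) ≤ lam i) (h0 : lam (N + 1) = 0) (Φ : (ℕ → ℕ → ℕ) → R) :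
    ∑ T ∈ tabs (N + 1) lam, Φ T =
      ∑ mu ∈ inter N lam, ∑ T ∈ tabs N (ext0 mu), Φ (extendT N lam T) := by
  rw [sum_sigma']
  symm
  have key : ∀ a ∈ (inter N lam).sigma fun mu => tabs N (ext0 mu),
      a.1 ∈ inter N lam ∧ IsTab N (ext0 a.1) a.2 := by
    rintro ⟨mu, T⟩ h
    rw [mem_sigma] at h
    exact ⟨h.1, (mem_tabs (ext0_anti h.1) (ext0_N mu le_rfl)).1 h.2⟩
  refine sum_bij (fun a _ => extendT N lam a.2) ?_ ?_ ?_ (fun _ _ => rfl)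
  · intro a ha
    obtain ⟨hmu, h1, h2, h3, h4⟩ := key a ha
    rw [mem_tabs hl h0]
    have hle := ext0_le hmu
    refine ⟨?_, ?_, ?_, ?_⟩
    · intro i j
      have := h1 i j
      have := h4 i j
      have := h4 i (j + 1)
      have := hle i
      unfold extendT
      split_ifs <;> omega
    · intro i j
      have a1 := h2 i j
      have a2 := h4 i j
      have a3 := h4 (i + 1) j
      have a4 := h3 (i + 1) j
      have := hle i
      have := hle (i + 1)
      have a5 : lam (i + 1) ≤ ext0 a.1 i := by
        by_cases hi : i < N
        · exact le_ext0 hmu hi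
        · rw [lam_zero_of_le hl h0 (by omega)]; exact Nat.zero_le _
      unfold extendT
      split_ifs <;> omega
    · intro i j
      unfold extendT
      split_ifs <;> omega
    · intro i j
      have := h4 i j
      have := hle i
      unfold extendT
      split_ifs <;> omega
  · rintro ⟨mu, T⟩ ha ⟨mu', T'⟩ ha' h
    obtain ⟨hmu, h1, h2, h3, h4⟩ := key _ ha
    obtain ⟨hmu', h1', h2', h3', h4'⟩ := key _ ha'
    dsimp only at *
    have hT : T = T' := by
      funext i j
      have e := congrFun (congrFun h i) j
      have := h3 i j
      have := h3' i j
      unfold extendT at e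
      split_ifs at e <;> omega
    subst hT
    have : mu = mu' := by
      funext i
      rw [← ext0_val mu, ← ext0_val mu']
      have : ∀ j, j < ext0 mu i ↔ j < ext0 mu' i := fun j => by rw [← h4, ← h4']
      have b1 := this (ext0 mu i)
      have b2 := this (ext0 mu' i)
      omega
    subst this
    rfl
  · intro U hU
    have hU := (mem_tabs hl h0).1 hU
    have hmono := hU.mono
    obtain ⟨h1, h2, h3, h4⟩ := hU
    have hex : ∀ i, ∃ j, ¬ U i j < N := fun i => ⟨lam i, by have := h4 i (lam i); omega⟩
    have hfind : ∀ i j, j < Nat.find (hex i) ↔ U i j < N := by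
      intro i j
      rw [Nat.lt_find_iff]
      exact ⟨fun h => not_not.1 (h j le_rfl), fun h k hk => not_not.2 ((hmono i hk).trans_lt h)⟩
    have hge : ∀ i j, min i (N + 1) ≤ U i j := by
      intro i j
      induction i with
      | zero => omega
      | succ i ih =>
        have b1 := h2 i j
        have b3 := h4 i j
        have b4 := h4 (i + 1) j
        have b5 := hl i
        omega
    have hext : ∀ i j, U i j < N ↔ j < ext0 (fun i : Fin N => Nat.find (hex i)) i := by
      intro i j
      by_cases hi : i < N
      · have he : ext0 (fun i : Fin N => Nat.find (hex i)) i = Nat.find (hex i) := by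
          simp only [ext0]
          rw [dif_pos hi]
        rw [he, hfind]
      · rw [ext0_N _ (not_lt.1 hi)]
        have := hge i j
        omega
    have hmu : (fun i : Fin N => Nat.find (hex i)) ∈ inter N lam := by
      rw [inter, Fintype.mem_piFinset]
      intro i
      rw [mem_Icc]
      constructor
      · by_contra hlt
        have c1 := hfind i (Nat.find (hex i))
        have c2 := h4 (i + 1) (Nat.find (hex i))
        have c3 := h2 i (Nat.find (hex i))
        have c4 := h4 i (Nat.find (hex i))
        have c5 := hl i
        omega
      · by_contra hlt
        have c1 := hfind i (lam i)
        have c2 := h4 i (lam i)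
        omega
    refine ⟨⟨fun i : Fin N => Nat.find (hex i), fun i j => min (U i j) N⟩, ?_, ?_⟩
    · rw [mem_sigma, mem_tabs (ext0_anti hmu) (ext0_N _ le_rfl)]
      refine ⟨hmu, ?_, ?_, ?_, ?_⟩
      · intro i j
        have := h1 i j
        dsimp only
        omega
      · intro i j
        have := h2 i j
        dsimp only
        omega
      · intro i j
        dsimp only
        omega
      · intro i j
        rw [← hext]
        dsimp only
        omega
    · funext i j
      have := h3 i j
      have := h4 i j
      dsimp only [extendT]
      split_ifs <;> omega

/-! ### Bialternant formulas -/

/-- The weight of a tableau: the product of `y u` over all entries `u`. -/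
def wt {R : Type*} [CommRing R] (y : ℕ → R) (N : ℕ) (lam : ℕ → ℕ) (T : ℕ → ℕ → ℕ) : R :=
  ∏ i ∈ range N, ∏ j ∈ range (lam i), y (T i j)

theorem wt_extendT {R : Type*} [CommRing R] (y : ℕ → R) {N : ℕ} {lam : ℕ → ℕ} {mu : Fin N → ℕ}
    (hmu : mu ∈ inter N lam) {T : ℕ → ℕ → ℕ} (hT : IsTab N (ext0 mu) T) :
    wt y (N + 1) lam (extendT N lam T) =
      y N ^ lam N * (∏ i : Fin N, y N ^ (lam i - mu i)) * wt y N (ext0 mu) T := by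
  obtain ⟨h1, h2, h3, h4⟩ := hT
  have hrow : ∀ i, ∏ j ∈ range (lam i), y (extendT N lam T i j) =
      y N ^ (lam i - ext0 mu i) * ∏ j ∈ range (ext0 mu i), y (T i j) := by
    intro i
    have hle := ext0_le hmu i
    rw [← Nat.sub_add_cancel hle, add_comm, prod_range_add, mul_comm, Nat.add_sub_cancel_left]
    congr 1
    · rw [prod_congr rfl (g := fun _ => y N), prod_const, card_range]
      intro j hj
      rw [mem_range] at hj
      have := h4 i (ext0 mu i + j)
      unfold extendT
      rw [if_neg (by omega), if_pos (by omega)]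
    · refine prod_congr rfl fun j hj => ?_
      rw [mem_range] at hj
      unfold extendT
      rw [if_pos ((h4 i j).2 hj)]
  rw [wt, prod_range_succ, wt, prod_congr rfl fun i _ => hrow i, hrow N, prod_mul_distrib,
    ext0_N mu le_rfl, ← Fin.prod_univ_eq_prod_range (fun i => y N ^ (lam i - ext0 mu i))]
  simp only [ext0_val, Nat.sub_zero, range_zero, prod_empty]
  ring

/-- The Schur polynomial `s_λ(y_0, …, y_{N-1})`, as a sum over tableaux. -/
noncomputable def schur {R : Type*} [CommRing R] (y : ℕ → R) (N : ℕ) (lam : ℕ → ℕ) : R :=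
  ∑ T ∈ tabs N lam, wt y N lam T

theorem schur_succ {R : Type*} [CommRing R] (y : ℕ → R) {N : ℕ} {lam : ℕ → ℕ}
    (hl : ∀ i, lam (i + 1) ≤ lam i) (h0 : lam (N + 1) = 0) :
    schur y (N + 1) lam = ∑ mu ∈ inter N lam,
      y N ^ lam N * (∏ i : Fin N, y N ^ (lam i - mu i)) * schur y N (ext0 mu) := by
  rw [schur, tab_branch hl h0]
  refine sum_congr rfl fun mu hmu => ?_
  rw [schur, mul_sum]
  refine sum_congr rfl fun T hT => ?_
  exact wt_extendT y hmu ((mem_tabs (ext0_anti hmu) (ext0_N mu le_rfl)).1 hT)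

theorem tabs_zero {lam : ℕ → ℕ} (hl : ∀ i, lam (i + 1) ≤ lam i) (h0 : lam 0 = 0) :
    tabs 0 lam = {fun _ _ => 0} := by
  ext T
  rw [mem_tabs hl h0, mem_singleton]
  constructor
  · rintro ⟨-, -, h3, -⟩
    funext i j
    have := h3 i j
    omega
  · rintro rfl
    refine ⟨by simp, by simp, by simp, fun i j => ?_⟩
    simp [lam_zero_of_le hl h0 (Nat.zero_le i)]

/-- The bialternant formula for Schur polynomials, by induction on the number of variables. -/
theorem alt_mul_schur {R : Type*} [CommRing R] (y : ℕ → R) (N : ℕ) : ∀ (lam : ℕ → ℕ)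
    (_ : ∀ i, lam (i + 1) ≤ lam i) (_ : lam N = 0),
    alt y N 0 * schur y N lam = alt y N lam := by
  induction N with
  | zero => intro lam hl h0; simp [alt, schur, tabs_zero hl h0, wt]
  | succ N ih =>
    intro lam hl h0
    rw [alt_branch y N lam hl, schur_succ y hl h0, alt_zero_succ, mul_assoc, mul_sum]
    congr 1
    refine sum_congr rfl fun mu hmu => ?_
    rw [← ih _ (ext0_anti hmu) (ext0_N mu le_rfl)]
    ring

/-- The Schur sum in which each tableau `T` is weighted further according to its entry `p = T 0 c`,
by the factor `s^(N-1-p) ∏_{i<p} (s + y_i)`. It is used when `(0, c)` is the last cell of row `0`. -/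
noncomputable def cornerSum {R : Type*} [CommRing R] (y : ℕ → R) (s : R) (N c : ℕ)
    (lam : ℕ → ℕ) : R :=
  ∑ T ∈ tabs N lam, wt y N lam T * (s ^ (N - 1 - T 0 c) * ∏ i ∈ range (T 0 c), (s + y i))

theorem cornerSum_succ {R : Type*} [CommRing R] (y : ℕ → R) (s : R) {N c : ℕ} {lam : ℕ → ℕ}
    (hl : ∀ i, lam (i + 1) ≤ lam i) (h0 : lam (N + 1) = 0) (hc : lam 0 = c + 1) :
    cornerSum y s (N + 1) c lam = ∑ mu ∈ inter N lam,
      y N ^ lam N * (∏ i : Fin N, y N ^ (lam i - mu i)) *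
        (if ext0 mu 0 = lam 0 then s * cornerSum y s N c (ext0 mu)
          else (∏ i : Fin N, (s + y i)) * schur y N (ext0 mu)) := by
  rw [cornerSum, tab_branch hl h0]
  refine sum_congr rfl fun mu hmu => ?_
  have hle := ext0_le hmu 0
  split_ifs with h
  · rw [cornerSum, mul_sum, mul_sum]
    refine sum_congr rfl fun T hT => ?_
    have hT := (mem_tabs (ext0_anti hmu) (ext0_N mu le_rfl)).1 hT
    have hlt : T 0 c < N := (hT.2.2.2 0 c).2 (by omega)
    rw [wt_extendT y hmu hT, show extendT N lam T 0 c = T 0 c by simp [extendT, hlt],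
      show N + 1 - 1 - T 0 c = N - 1 - T 0 c + 1 by omega]
    ring
  · rw [schur, mul_sum, mul_sum]
    refine sum_congr rfl fun T hT => ?_
    have hT := (mem_tabs (ext0_anti hmu) (ext0_N mu le_rfl)).1 hT
    have hlt : ¬ T 0 c < N := fun hh => by have := (hT.2.2.2 0 c).1 hh; omega
    rw [wt_extendT y hmu hT, show extendT N lam T 0 c = N by simp [extendT, hlt, hc],
      Fin.prod_univ_eq_prod_range (fun i => s + y i)]
    simp only [Nat.add_sub_cancel, Nat.sub_self, pow_zero]
    ring

/-- The bialternant formula for `cornerSum` at the last cell of row `0`: both sides satisfy the same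
branching rule. -/
theorem alt_mul_cornerSum {R : Type*} [CommRing R] [IsDomain R] (y : ℕ → R) (s : R) (c N : ℕ)
    (hs : ∀ i, i < N + 1 → s + y i ≠ 0) : ∀ (lam : ℕ → ℕ)
    (_ : ∀ i, lam (i + 1) ≤ lam i) (_ : lam (N + 1) = 0) (_ : lam 0 = c + 1),
    alt y (N + 1) 0 * cornerSum y s (N + 1) c lam = altG y s (N + 1) lam := by
  induction N with
  | zero =>
    intro lam hl h0 hc
    have hz : ext0 (fun a : Fin 0 => a.elim0) 0 ≠ lam 0 := by rw [hc]; simp [ext0]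
    rw [cornerSum_succ y s hl h0 hc]
    have hi : inter 0 lam = {fun a : Fin 0 => a.elim0} := by
      ext f
      simp [inter, Subsingleton.elim f (fun a : Fin 0 => a.elim0)]
      exact Subsingleton.elim _ _
    have ha : ∀ i, ext0 (fun a : Fin 0 => a.elim0) i = 0 := fun i => ext0_N _ (Nat.zero_le _)
    rw [hi, sum_singleton, if_neg hz, schur, tabs_zero (by simp [ha]) (ha 0)]
    simp [alt, altG, wt]
  | succ N ih =>
    intro lam hl h0 hc
    apply mul_left_cancel₀ (hs (N + 1) (by omega))
    rw [altG_branch y s (N + 1) (by omega) lam hl, cornerSum_succ y s hl h0 hc, alt_zero_succ,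
      mul_assoc (∏ i : Fin (N + 1), (y i - y (N + 1))), mul_sum]
    congr 2
    refine sum_congr rfl fun mu hmu => ?_
    split_ifs with h
    · rw [← ih (fun i hi => hs i (by omega)) _ (ext0_anti hmu) (ext0_N mu le_rfl) (h.trans hc)]
      ring
    · rw [← alt_mul_schur y (N + 1) _ (ext0_anti hmu) (ext0_N mu le_rfl)]
      ring

/-! ### The generating function identity -/

/-- The shape `(n+k, n, n-1, …, 1)`, obtained by rotating by 180° the staircase with a row of the
full length `n + k` placed below it. -/
def rowShape (n k : ℕ) : ℕ → ℕ := fun i => if i = 0 then n + k else n + 1 - i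

/-- Eliminating the variable `y 0` from the alternant of `(n, n, n-1, …, 1)`: the exponents drop by `1`
between the first two columns and by `2` afterwards, which produces the factors of `altG`. -/
theorem alt_rowShape_zero {R : Type*} [CommRing R] (y : ℕ → R) (n : ℕ) :
    alt y (n + 2) (rowShape n 0) = (-1) ^ (n + 1) * ((∏ i : Fin (n + 1), (y (i + 1) - y 0)) *
      altG (fun i => y (i + 1)) (y 0) (n + 1) (fun i => n - i)) := by
  have := det_branch (n + 1) 0 (fun i => y i)
    (fun j x => x ^ (rowShape n 0 j + (n + 1 - j) : ℕ))
    (fun j x => (if (j : ℕ) = 0 then 1 else y 0 + x) * x ^ (n - j + (n + 1 - 1 - j) : ℕ))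
    (fun _ => 1) (fun j => if (j : ℕ) = 0 then y 0 else y 0 ^ 2) (by
      intro j x
      simp only [Fin.val_castSucc, Fin.val_succ, Fin.val_zero, rowShape, Nat.add_eq_zero_iff,
        one_ne_zero, and_false, if_false]
      by_cases hj : (j : ℕ) = 0
      · simp only [hj, if_true, Nat.sub_zero, Nat.add_zero, Nat.zero_add, Nat.add_sub_cancel]
        ring
      · simp only [hj, if_false]
        rw [show n + 1 - (j : ℕ) + (n + 1 - j) = n - j + (n + 1 - 1 - j) + 2 by omega,
          show n + 1 - (j + 1 : ℕ) + (n + 1 - (j + 1)) = n - j + (n + 1 - 1 - j) by omega]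
        ring)
  simpa [alt, altG, rowShape] using this

/-- Eliminating the variable `y 0` from the alternant of `(n+1, n, …, 1)`: all exponents drop by `2`,
so that every column acquires the factor `y 0 + x`. -/
theorem alt_rowShape_one {R : Type*} [CommRing R] (y : ℕ → R) (n : ℕ) :
    alt y (n + 2) (rowShape n 1) = (-1) ^ (n + 1) * ((∏ i : Fin (n + 1), (y (i + 1) - y 0)) *
      ((∏ i : Fin (n + 1), (y 0 + y (i + 1))) *
        alt (fun i => y (i + 1)) (n + 1) (fun i => n - i))) := by
  have := det_branch (n + 1) 0 (fun i => y i)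
    (fun j x => x ^ (rowShape n 1 j + (n + 1 - j) : ℕ))
    (fun j x => (y 0 + x) * x ^ (n - j + (n + 1 - 1 - j) : ℕ))
    (fun _ => 1) (fun j => y 0 ^ 2) (by
      intro j x
      simp only [Fin.val_castSucc, Fin.val_succ, Fin.val_zero, rowShape, Nat.add_eq_zero_iff,
        one_ne_zero, and_false, if_false]
      rw [show (if (j : ℕ) = 0 then n + 1 else n + 1 - j) + (n + 1 - j)
          = n - j + (n + 1 - 1 - j) + 2 by split_ifs <;> omega,
        show n + 1 - (j + 1 : ℕ) + (n + 1 - (j + 1)) = n - j + (n + 1 - 1 - j) by omega]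
      ring)
  rw [alt, alt, ← Matrix.det_mul_column]
  simpa [rowShape] using this

/-- The generating function identity behind the theorem. With `y 0` as an extra variable, the left side
collects the tableaux of the row shapes for all lengths `m`, and the right side, after expansion of the
product, those of the column shapes. -/
theorem row_eq_column {R : Type*} [CommRing R] [IsDomain R] (y : ℕ → R) (n k : ℕ) (hn : 1 ≤ n)
    (hk : k ≤ 1) (hy : ∀ i j, i < n + 2 → j < n + 2 → y i = y j → i = j)
    (hs : ∀ i, i < n + 1 → y 0 + y (i + 1) ≠ 0) :
    schur y (n + 2) (rowShape n k) =
      ∑ T ∈ tabs (n + 1) (fun i => n - i), wt (fun i => y (i + 1)) (n + 1) (fun i => n - i) T *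
        (y 0 ^ (n + k - T 0 (n + k - 1)) *
          ∏ i ∈ range (T 0 (n + k - 1)), (y 0 + y (i + 1))) := by
  have hd : ∀ i, n - (i + 1) ≤ n - i := fun i => by omega
  have hr : ∀ i, rowShape n k (i + 1) ≤ rowShape n k i := by
    intro i
    simp only [rowShape, Nat.succ_ne_zero, if_false]
    split_ifs <;> omega
  apply mul_left_cancel₀ (alt_zero_ne y (n + 2) hy)
  rw [alt_mul_schur y _ _ hr (by simp [rowShape])]
  obtain rfl | rfl : k = 0 ∨ k = 1 := by omega
  · have := alt_mul_cornerSum (fun i => y (i + 1)) (y 0) (n - 1) n hs (fun i => n - i) hd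
      (by simp) (by simp; omega)
    rw [alt_rowShape_zero, ← this, alt_zero_succ' y (n + 1), cornerSum]
    simp only [Nat.add_zero, Nat.add_sub_cancel]
    ring
  · rw [alt_rowShape_one, ← alt_mul_schur _ (n + 1) (fun i => n - i) hd (by simp),
      alt_zero_succ' y (n + 1), schur, mul_sum, mul_sum, mul_sum, mul_sum, mul_sum]
    refine sum_congr rfl fun T hT => ?_
    have hT := (mem_tabs hd (by simp)).1 hT
    have hcap : T 0 (n + 1 - 1) = n + 1 := by
      have := hT.2.2.1 0 n
      have := hT.2.2.2 0 n
      simp only [Nat.add_sub_cancel]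
      omega
    rw [hcap, Fin.prod_univ_eq_prod_range (fun i => y 0 + y (i + 1))]
    simp only [Nat.sub_self, pow_zero]
    ring

/-! ### Cells and contents -/

/-- The number of cells carrying the value `v`, read off from a sum of unit vectors over the cells. -/
theorem sum_single_apply {N : ℕ} {lam : ℕ → ℕ} (g : ℕ → ℕ → ℕ) (hz : ∀ i, N ≤ i → lam i = 0)
    (v : ℕ) :
    (∑ i ∈ range N, ∑ j ∈ range (lam i), Finsupp.single (g i j) 1 : ℕ →₀ ℕ) v =
      {q : ℕ × ℕ | q.2 < lam q.1 ∧ g q.1 q.2 = v}.ncard := by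
  have hset : {q : ℕ × ℕ | q.2 < lam q.1 ∧ g q.1 q.2 = v} =
      ((((range N).sigma fun i => range (lam i)).filter fun x => g x.1 x.2 = v).map
        (Equiv.sigmaEquivProd ℕ ℕ).toEmbedding : Finset (ℕ × ℕ)) := by
    ext ⟨i, j⟩
    simp only [Set.mem_ofPred_eq, coe_map, Set.mem_image, mem_coe, mem_filter, mem_sigma, mem_range]
    constructor
    · rintro ⟨h1, h2⟩
      refine ⟨⟨i, j⟩, ⟨⟨?_, h1⟩, h2⟩, rfl⟩
      by_contra hi
      have := hz i (not_lt.1 hi)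
      omega
    · rintro ⟨⟨i', j'⟩, ⟨⟨-, h1⟩, h2⟩, h3⟩
      obtain ⟨rfl, rfl⟩ := Prod.mk.inj h3
      exact ⟨h1, h2⟩
  rw [hset, Set.ncard_coe_finset, card_map, card_filter, sum_sigma, Finsupp.finsetSum_apply]
  refine sum_congr rfl fun i _ => ?_
  rw [Finsupp.finsetSum_apply]
  refine sum_congr rfl fun j _ => ?_
  rw [Finsupp.single_apply]

theorem IsTab.col_lt {N : ℕ} {lam : ℕ → ℕ} {T : ℕ → ℕ → ℕ} (h : IsTab N lam T) {i i' j : ℕ}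
    (hi : i < i') (hT : T i' j < N) (hl : ∀ i, lam (i + 1) ≤ lam i) : T i j < T i' j := by
  induction i', hi using Nat.le_induction with
  | base =>
    have h1 := h.2.1 i j
    have h2 := h.2.2.2 i j
    have h3 := h.2.2.2 (i + 1) j
    have := hl i
    simp only [Nat.succ_eq_add_one] at *
    omega
  | succ i' hi ih =>
    have h1 := h.2.1 i' j
    have h2 := h.2.2.2 i' j
    have h3 := h.2.2.2 (i' + 1) j
    have := hl i'
    have := ih (by omega)
    omega

theorem mem_row {n k m r c : ℕ} (hk : k ≤ 1) :
    (r, c) ∈ SBF (fun i => if i = 0 then m else 0) k n ↔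
      (r < n ∧ k + n - 1 - r ≤ c ∧ c < n + k) ∨ (r = n ∧ c < m) := by
  simp only [SBF, staircaseCells, foundationCells, Set.mem_union, Set.mem_ofPred_eq]
  refine or_congr Iff.rfl ?_
  split_ifs <;> omega

theorem mem_col {n k m r c : ℕ} (hk : k ≤ 1) :
    (r, c) ∈ SBF (fun i => if i < m then 1 else 0) k n ↔
      (r < n ∧ k + n - 1 - r ≤ c ∧ c < n + k) ∨ (n ≤ r ∧ r < n + m ∧ c = 0) := by
  simp only [SBF, staircaseCells, foundationCells, Set.mem_union, Set.mem_ofPred_eq]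
  refine or_congr Iff.rfl ?_
  split_ifs <;> omega

theorem finite_row {n k m : ℕ} (hk : k ≤ 1) :
    (SBF (fun i => if i = 0 then m else 0) k n).Finite := by
  refine ((Set.finite_Iio (n + 1)).prod (Set.finite_Iio (n + k + m))).subset ?_
  rintro ⟨r, c⟩ h
  rw [mem_row hk] at h
  simp only [Set.mem_prod, Set.mem_Iio]
  omega

theorem finite_col {n k m : ℕ} (hk : k ≤ 1) :
    (SBF (fun i => if i < m then 1 else 0) k n).Finite := by
  refine ((Set.finite_Iio (n + m)).prod (Set.finite_Iio (n + k + 1))).subset ?_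
  rintro ⟨r, c⟩ h
  rw [mem_col hk] at h
  simp only [Set.mem_prod, Set.mem_Iio]
  omega

/-- A tableau whose content is supported on `{1, …, n+1}` has entries at most `n + 1`. -/
theorem entry_le {D : Set (ℕ × ℕ)} (hD : D.Finite) {T : ℕ × ℕ → ℕ} {alpha : ℕ → ℕ} {n : ℕ}
    (ha : ∀ v, n + 1 < v → alpha v = 0) (hT : ∀ v, 1 ≤ v → contentOf D T v = alpha v)
    {p : ℕ × ℕ} (hp : p ∈ D) : T p ≤ n + 1 := by
  by_contra h
  have h1 := hT (T p) (by omega)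
  rw [ha _ (by omega), contentOf, Set.ncard_eq_zero (hD.subset fun q hq => hq.1)] at h1
  exact (Set.eq_empty_iff_forall_notMem.1 h1 p) ⟨hp, rfl⟩

/-- The variable attached to the letter `u` of a rotated tableau: the extra smallest letter `0` keeps
the index `0`, and `u = 1, …, n+1` corresponds to the entry `n + 2 - u` of the original tableau. -/
def idx (n u : ℕ) : ℕ := if u = 0 then 0 else n + 2 - u

/-! ### Tableaux with a foundation row -/

/-- The exponent vector of the monomial of a tableau `U` of shape `rowShape n k`. -/
noncomputable def contR (n k : ℕ) (U : ℕ → ℕ → ℕ) : ℕ →₀ ℕ :=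
  ∑ i ∈ range (n + 2), ∑ j ∈ range (rowShape n k i), Finsupp.single (idx n (U i j)) 1

theorem contR_apply (n k : ℕ) (U : ℕ → ℕ → ℕ) (v : ℕ) : contR n k U v =
    {q : ℕ × ℕ | q.2 < rowShape n k q.1 ∧ idx n (U q.1 q.2) = v}.ncard := by
  refine sum_single_apply (fun i j => idx n (U i j)) (fun i hi => ?_) v
  simp only [rowShape]
  split_ifs <;> omega

/-- The exponent vector `x_0^z x_1^{α_1} ⋯ x_{n+1}^{α_{n+1}}`. -/
noncomputable def expo (n z : ℕ) (alpha : ℕ → ℕ) : ℕ →₀ ℕ :=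
  Finsupp.onFinset (range (n + 2)) (fun v => if v = 0 then z else if v < n + 2 then alpha v else 0)
    (by intro v hv; rw [mem_range]; by_contra h; apply hv; rw [if_neg (by omega), if_neg h])

theorem eq_expo_iff {n z : ℕ} {alpha : ℕ → ℕ} (ha : ∀ v, n + 1 < v → alpha v = 0)
    (c : ℕ →₀ ℕ) : c = expo n z alpha ↔ c 0 = z ∧ ∀ v, 1 ≤ v → c v = alpha v := by
  have hv : ∀ v, 1 ≤ v → expo n z alpha v = alpha v := by
    intro v hv
    simp only [expo, Finsupp.onFinset_apply]
    rw [if_neg (by omega)]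
    split_ifs with h
    · rfl
    · exact (ha v (by omega)).symm
  have h0 : expo n z alpha 0 = z := by simp [expo]
  constructor
  · rintro rfl
    exact ⟨h0, hv⟩
  · rintro ⟨h1, h2⟩
    ext v
    rcases Nat.eq_zero_or_pos v with rfl | h
    · rw [h1, h0]
    · rw [h2 v h, hv v h]

theorem contR_zero {n k z : ℕ} {U : ℕ → ℕ → ℕ} (hU : IsTab (n + 2) (rowShape n k) U)
    (hZ : ∀ i j, U i j = 0 ↔ i = 0 ∧ j < z) : contR n k U 0 = z := by
  rw [contR_apply]
  have : {q : ℕ × ℕ | q.2 < rowShape n k q.1 ∧ idx n (U q.1 q.2) = 0} =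
      ((range z).map ⟨fun j => (0, j), fun a b h => (Prod.mk.inj h).2⟩ : Finset (ℕ × ℕ)) := by
    ext ⟨i, j⟩
    simp only [Set.mem_ofPred_eq, coe_map, Set.mem_image, mem_coe, mem_range]
    have h1 := hU.2.2.2 i j
    have h2 := hZ i j
    constructor
    · rintro ⟨h3, h4⟩
      have : U i j = 0 := by
        unfold idx at h4
        split_ifs at h4 <;> omega
      obtain ⟨rfl, h5⟩ := h2.1 this
      exact ⟨j, h5, rfl⟩
    · rintro ⟨j', h3, h⟩
      obtain ⟨rfl, rfl⟩ := Prod.mk.inj h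
      have : U 0 j' = 0 := h2.2 ⟨rfl, h3⟩
      exact ⟨h1.1 (by omega), by simp [idx, this]⟩
  rw [this, Set.ncard_coe_finset, card_map, card_range]

/-- The letters `0` of a tableau fill an initial segment of row `0`, so their positions are
determined by their number. -/
theorem zeros_of_contR {n k z : ℕ} {U : ℕ → ℕ → ℕ}
    (hU : IsTab (n + 2) (rowShape n k) U) (hc : contR n k U 0 = z) (i j : ℕ) :
    U i j = 0 ↔ i = 0 ∧ j < z := by
  have hcap : ¬ U 0 (n + k) < n + 2 := by
    rw [hU.2.2.2]; simp [rowShape]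
  have hex : ∃ j, ¬ U 0 j = 0 := ⟨n + k, by omega⟩
  have hf : ∀ i j, U i j = 0 ↔ i = 0 ∧ j < Nat.find hex := by
    intro i j
    rw [Nat.lt_find_iff]
    constructor
    · intro h
      have hi : i = 0 := by
        by_contra hi
        obtain ⟨i, rfl⟩ := Nat.exists_eq_succ_of_ne_zero hi
        have h1 := hU.2.1 i j
        have h2 := hU.2.2.1 i j
        have h3 := hU.2.2.2 i j
        have h4 := hU.2.2.2 (i + 1) j
        have h5 : rowShape n k (i + 1) ≤ rowShape n k i + 1 - 1 ∨ U i j < n + 2 := by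
          left
          simp only [rowShape, Nat.succ_ne_zero, if_false]
          split_ifs <;> omega
        simp only [Nat.succ_eq_add_one] at h
        omega
      subst hi
      exact ⟨rfl, fun l hl => not_not.2 (by have := hU.mono 0 hl; omega)⟩
    · rintro ⟨rfl, h⟩
      exact not_not.1 (h j le_rfl)
  have := contR_zero hU hf
  rw [hf, ← hc, this]

theorem rowShape_anti (n k i : ℕ) : rowShape n k (i + 1) ≤ rowShape n k i := by
  simp only [rowShape, Nat.succ_ne_zero, if_false]
  split_ifs <;> omega

/-- Contents agree under the 180° rotation of the staircase with a foundation row of length `m`; the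
`n + k - m` cells missing from the full row carry the letter `0`. -/
theorem row_content {n k m : ℕ} (hk : k ≤ 1) (hmn : m ≤ k + n) {T : ℕ × ℕ → ℕ} {U : ℕ → ℕ → ℕ}
    (hZ : ∀ i j, U i j = 0 ↔ i = 0 ∧ j < n + k - m)
    (hTU : ∀ r c, (r, c) ∈ SBF (fun i => if i = 0 then m else 0) k n →
      U (n - r) (n + k - 1 - c) = n + 2 - T (r, c) ∧ T (r, c) ≤ n + 1) (v : ℕ) (hv : 1 ≤ v) :
    contentOf (SBF (fun i => if i = 0 then m else 0) k n) T v = contR n k U v := by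
  rw [contR_apply, contentOf]
  refine Set.ncard_congr (fun p _ => (n - p.1, n + k - 1 - p.2)) ?_ ?_ ?_
  · rintro ⟨r, c⟩ ⟨hp, hT⟩
    obtain ⟨h1, h2⟩ := hTU r c hp
    rw [mem_row hk] at hp
    refine ⟨?_, ?_⟩
    · simp only [rowShape]
      split_ifs <;> omega
    · simp only [h1, hT, idx]
      split_ifs <;> omega
  · rintro ⟨r, c⟩ ⟨r', c'⟩ ⟨hp, -⟩ ⟨hp', -⟩ h
    rw [mem_row hk] at hp hp'
    obtain ⟨h1, h2⟩ := Prod.mk.inj h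
    dsimp only at h1 h2
    rw [Prod.mk.injEq]
    omega
  · rintro ⟨i, j⟩ ⟨h1, h2⟩
    have hij : i ≤ n ∧ j < n + k ∧ (i = 0 ∨ j < n + 1 - i) := by
      simp only [rowShape] at h1
      split_ifs at h1 <;> omega
    have hz : ¬ (i = 0 ∧ j < n + k - m) := by
      rw [← hZ]
      intro h
      simp [idx, h] at h2
      omega
    have hmem : (n - i, n + k - 1 - j) ∈ SBF (fun i => if i = 0 then m else 0) k n := by
      rw [mem_row hk]; omega
    obtain ⟨h3, h4⟩ := hTU _ _ hmem
    rw [show n - (n - i) = i by omega, show n + k - 1 - (n + k - 1 - j) = j by omega] at h3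
    refine ⟨(n - i, n + k - 1 - j), ⟨hmem, ?_⟩, ?_⟩
    · simp only [h3, idx] at h2
      split_ifs at h2 <;> omega
    · rw [Prod.mk.injEq]; dsimp only; omega

/-- Rotating by 180° and reversing the order of the letters, tableaux of the staircase with foundation
row `(m)` correspond to tableaux of shape `rowShape n k` having exactly `n + k - m` letters `0`. -/
theorem row_count {n k m : ℕ} (hk : k ≤ 1) (hmn : m ≤ k + n) {alpha : ℕ → ℕ}
    (ha : ∀ v, n + 1 < v → alpha v = 0) :
    SSYTcount (SBF (fun i => if i = 0 then m else 0) k n) alpha =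
      #{U ∈ tabs (n + 2) (rowShape n k) | contR n k U = expo n (n + k - m) alpha} := by
  have hr := rowShape_anti n k
  have hr0 : rowShape n k (n + 2) = 0 := by simp [rowShape]
  rw [SSYTcount, ← Set.ncard_coe_finset]
  refine Set.ncard_congr (fun T _ i j => if j < rowShape n k i then
    (if i = 0 ∧ j < n + k - m then 0 else n + 2 - T (n - i, n + k - 1 - j)) else n + 2) ?_ ?_ ?_
  · rintro T ⟨⟨hpos, hout, hrow, hcol⟩, hcont⟩
    have hle := fun p => entry_le (finite_row hk) ha hcont (p := p)
    have hcell : ∀ i j, j < rowShape n k i → ¬ (i = 0 ∧ j < n + k - m) →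
        (n - i, n + k - 1 - j) ∈ SBF (fun i => if i = 0 then m else 0) k n := by
      intro i j h1 h2
      rw [mem_row hk]
      simp only [rowShape] at h1
      split_ifs at h1 <;> omega
    have hbd : ∀ i j, j < rowShape n k i → ¬ (i = 0 ∧ j < n + k - m) →
        0 < T (n - i, n + k - 1 - j) ∧ T (n - i, n + k - 1 - j) ≤ n + 1 := fun i j h1 h2 =>
      ⟨hpos _ (hcell i j h1 h2), hle _ (hcell i j h1 h2)⟩
    have hshape : ∀ i j, j < rowShape n k i → i ≤ n ∧ j < n + k := by
      intro i j h1
      simp only [rowShape] at h1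
      split_ifs at h1 <;> omega
    have htab : IsTab (n + 2) (rowShape n k) (fun i j => if j < rowShape n k i then
        (if i = 0 ∧ j < n + k - m then 0 else n + 2 - T (n - i, n + k - 1 - j)) else n + 2) := by
      refine ⟨?_, ?_, ?_, ?_⟩
      · intro i j
        dsimp only
        by_cases h1 : j + 1 < rowShape n k i
        · rw [if_pos h1, if_pos (by omega)]
          by_cases h2 : i = 0 ∧ j < n + k - m
          · rw [if_pos h2]; exact Nat.zero_le _
          · rw [if_neg h2, if_neg (by omega)]
            have := hrow (n - i) (n + k - 1 - (j + 1)) (n + k - 1 - j) (by omega)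
              (hcell i (j + 1) h1 (by omega)) (hcell i j (by omega) h2)
            omega
        · rw [if_neg h1]
          split_ifs <;> omega
      · intro i j
        dsimp only
        by_cases h1 : j < rowShape n k i
        · rw [if_pos h1]
          intro _
          by_cases h3 : j < rowShape n k (i + 1)
          · rw [if_pos h3, if_neg (c := i + 1 = 0 ∧ _) (by omega)]
            have b1 := hbd (i + 1) j h3 (by omega)
            split_ifs with h2
            · omega
            · have := hcol (n - (i + 1)) (n - i) (n + k - 1 - j)
                (by have := hshape _ _ h3; omega) (hcell (i + 1) j h3 (by omega))
                (hcell i j h1 h2)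
              have b2 := hbd i j h1 h2
              omega
          · rw [if_neg h3]
            split_ifs with h2
            · omega
            · have b2 := hbd i j h1 h2
              omega
        · rw [if_neg h1]; omega
      · intro i j
        dsimp only
        split_ifs <;> omega
      · intro i j
        dsimp only
        by_cases h1 : j < rowShape n k i
        · rw [if_pos h1]
          split_ifs with h2
          · omega
          · have b2 := hbd i j h1 h2
            omega
        · rw [if_neg h1]; omega
    have hZ : ∀ i j, (if j < rowShape n k i then
        (if i = 0 ∧ j < n + k - m then 0 else n + 2 - T (n - i, n + k - 1 - j)) else n + 2) = 0 ↔
        i = 0 ∧ j < n + k - m := by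
      intro i j
      by_cases h2 : i = 0 ∧ j < n + k - m
      · have : j < rowShape n k i := by simp only [rowShape, h2.1, if_true]; omega
        rw [if_pos this, if_pos h2]
        exact ⟨fun _ => h2, fun _ => rfl⟩
      · by_cases h1 : j < rowShape n k i
        · rw [if_pos h1, if_neg h2]
          have b2 := hbd i j h1 h2
          omega
        · rw [if_neg h1]
          omega
    rw [coe_filter, Set.mem_ofPred_eq, mem_tabs hr hr0, eq_expo_iff ha]
    refine ⟨htab, contR_zero htab hZ, fun v hv => ?_⟩
    rw [← row_content (T := T) hk hmn hZ _ v hv, hcont v hv]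
    intro r c hp
    refine ⟨?_, hle _ hp⟩
    have hp' := (mem_row hk).1 hp
    have e1 : n - (n - r) = r := by omega
    have e2 : n + k - 1 - (n + k - 1 - c) = c := by omega
    rw [if_pos, if_neg (by omega), e1, e2]
    simp only [rowShape]
    split_ifs <;> omega
  · rintro T T' ⟨⟨hpos, hout, hrow, hcol⟩, hcont⟩ ⟨⟨hpos', hout', hrow', hcol'⟩, hcont'⟩ h
    have hle := fun p => entry_le (finite_row hk) ha hcont (p := p)
    have hle' := fun p => entry_le (finite_row hk) ha hcont' (p := p)
    funext ⟨r, c⟩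
    by_cases hp : (r, c) ∈ SBF (fun i => if i = 0 then m else 0) k n
    · have hp' := (mem_row hk).1 hp
      have e1 : n - (n - r) = r := by omega
      have e2 : n + k - 1 - (n + k - 1 - c) = c := by omega
      have hs : n + k - 1 - c < rowShape n k (n - r) := by
        simp only [rowShape]
        split_ifs <;> omega
      have := congrFun (congrFun h (n - r)) (n + k - 1 - c)
      rw [if_pos hs, if_pos hs, if_neg (by omega), if_neg (by omega), e1, e2] at this
      have := hle _ hp
      have := hle' _ hp
      omega
    · rw [hout _ hp, hout' _ hp]
  · intro U hU
    rw [coe_filter, Set.mem_ofPred_eq, mem_tabs hr hr0, eq_expo_iff ha] at hU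
    obtain ⟨hU, hc0, hcv⟩ := hU
    have hZ := zeros_of_contR hU hc0
    classical
    have hcell : ∀ r c, (r, c) ∈ SBF (fun i => if i = 0 then m else 0) k n →
        0 < U (n - r) (n + k - 1 - c) ∧ U (n - r) (n + k - 1 - c) < n + 2 := by
      intro r c hp
      rw [mem_row hk] at hp
      constructor
      · rw [Nat.pos_iff_ne_zero, Ne, hZ]
        omega
      · rw [hU.2.2.2]
        simp only [rowShape]
        split_ifs <;> omega
    refine ⟨fun p => if p ∈ SBF (fun i => if i = 0 then m else 0) k n then
      n + 2 - U (n - p.1) (n + k - 1 - p.2) else 0, ⟨⟨?_, ?_, ?_, ?_⟩, ?_⟩, ?_⟩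
    · rintro ⟨r, c⟩ hp
      have := hcell r c hp
      dsimp only
      rw [if_pos hp]
      omega
    · intro p hp
      dsimp only
      rw [if_neg hp]
    · intro r c1 c2 hc hp1 hp2
      dsimp only
      rw [if_pos hp1, if_pos hp2]
      have := hU.mono (n - r) (show n + k - 1 - c2 ≤ n + k - 1 - c1 by omega)
      omega
    · intro r1 r2 c hlt hp1 hp2
      have b1 := hcell _ _ hp1
      have b2 := hcell _ _ hp2
      dsimp only
      rw [if_pos hp1, if_pos hp2]
      rw [mem_row hk] at hp1 hp2
      have := hU.col_lt (show n - r2 < n - r1 by omega) b1.2 hr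
      omega
    · intro v hv
      rw [row_content hk hmn hZ _ v hv, hcv v hv]
      intro r c hp
      have := hcell r c hp
      dsimp only
      rw [if_pos hp]
      omega
    · funext i j
      by_cases h1 : j < rowShape n k i
      · rw [if_pos h1]
        by_cases h2 : i = 0 ∧ j < n + k - m
        · rw [if_pos h2, (hZ i j).2 h2]
        · have hmem : (n - i, n + k - 1 - j) ∈ SBF (fun i => if i = 0 then m else 0) k n := by
            rw [mem_row hk]
            simp only [rowShape] at h1
            split_ifs at h1 <;> omega
          have hij : i ≤ n ∧ j < n + k := by
            simp only [rowShape] at h1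
            split_ifs at h1 <;> omega
          rw [if_neg h2]
          dsimp only
          rw [if_pos hmem]
          have := hU.2.2.1 i j
          rw [show n - (n - i) = i by omega, show n + k - 1 - (n + k - 1 - j) = j by omega]
          omega
      · rw [if_neg h1]
        have := hU.2.2.2 i j
        have := hU.2.2.1 i j
        omega

/-! ### Tableaux with a foundation column -/

/-- A set of `m` numbers is the set of entries of a strictly increasing column of length `m`. -/
theorem exists_enum (B : Finset ℕ) {m : ℕ} (hB : #B = m) :
    ∃ f : ℕ → ℕ, (∀ a b, a < b → b < m → f a < f b) ∧ (range m).image f = B := by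
  refine ⟨fun a => if h : a < m then B.orderEmbOfFin hB ⟨a, h⟩ else 0, ?_, ?_⟩
  · intro a b hab hb
    dsimp only
    rw [dif_pos hb, dif_pos (hab.trans hb)]
    exact (B.orderEmbOfFin hB).strictMono hab
  · ext b
    simp only [mem_image, mem_range]
    constructor
    · rintro ⟨a, ha, rfl⟩
      rw [dif_pos ha]
      exact orderEmbOfFin_mem _ _ _
    · intro hb
      have : b ∈ Set.range (B.orderEmbOfFin hB) := by rw [range_orderEmbOfFin]; exact hb
      obtain ⟨a, rfl⟩ := this
      exact ⟨a, a.2, by rw [dif_pos a.2]⟩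

/-- A strictly increasing column is determined by its set of entries. -/
theorem enum_unique {m : ℕ} {f g : ℕ → ℕ} (hf : ∀ a b, a < b → b < m → f a < f b)
    (hg : ∀ a b, a < b → b < m → g a < g b) (h : (range m).image f = (range m).image g)
    {a : ℕ} (ha : a < m) : f a = g a := by
  have hc : #((range m).image f) = m := by
    rw [card_image_of_injOn, card_range]
    intro a ha b hb hab
    simp only [coe_range, Set.mem_Iio] at ha hb
    rcases lt_trichotomy a b with h | h | h
    · have := hf a b h hb; omega
    · exact h
    · have := hf b a h ha; omega
  have h1 := orderEmbOfFin_unique hc (f := fun a : Fin m => f a)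
    (fun x => mem_image_of_mem f (mem_range.2 x.2)) (fun a b hab => hf a b hab b.2)
  have h2 := orderEmbOfFin_unique hc (f := fun a : Fin m => g a)
    (fun x => h ▸ mem_image_of_mem g (mem_range.2 x.2)) (fun a b hab => hg a b hab b.2)
  exact congrFun (h1.trans h2.symm) ⟨a, ha⟩

/-- The exponent vector of a pair `(U, A)`, where `U` is a rotated staircase tableau, whose letter `u`
stands for the entry `n + 1 - u`, and `A` is the set of rotated entries of the foundation column. The
variable of index `0` gets the exponent `n + k - #A`. -/
noncomputable def contC (n k : ℕ) (U : ℕ → ℕ → ℕ) (A : Finset ℕ) : ℕ →₀ ℕ :=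
  (∑ i ∈ range (n + 1), ∑ j ∈ range (n - i), Finsupp.single (n + 1 - U i j) 1) +
    (∑ a ∈ A, Finsupp.single (n + 1 - a) 1) + Finsupp.single 0 (n + k - #A)

theorem contC_zero {n k : ℕ} {U : ℕ → ℕ → ℕ} (hU : IsTab (n + 1) (fun i => n - i) U)
    {A : Finset ℕ} (hA : ∀ a ∈ A, a < n + 1) : contC n k U A 0 = n + k - #A := by
  have h1 : ∀ i j, j < n - i → n + 1 - U i j ≠ 0 := by
    intro i j hj
    have := (hU.2.2.2 i j).2 hj
    omega
  simp only [contC, Finsupp.add_apply, Finsupp.finsetSum_apply, Finsupp.single_eq_same]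
  rw [sum_eq_zero (s := range (n + 1)), sum_eq_zero (s := A), zero_add, zero_add]
  · intro a ha
    have := hA a ha
    exact Finsupp.single_eq_of_ne (by omega)
  · intro i _
    refine sum_eq_zero fun j hj => ?_
    have := h1 i j (mem_range.1 hj)
    exact Finsupp.single_eq_of_ne (by omega)

/-- Contents agree when a tableau of the staircase with a foundation column is split into the rotated
staircase tableau `U` and the set of rotated entries of the column. -/
theorem col_content {n k m : ℕ} (hk : k ≤ 1) {T : ℕ × ℕ → ℕ} {U : ℕ → ℕ → ℕ}
    (hle : ∀ p ∈ SBF (fun i => if i < m then 1 else 0) k n, 0 < T p ∧ T p ≤ n + 1)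
    (hTU : ∀ i j, j < n - i → U i j = n + 1 - T (n - 1 - i, n + k - 1 - j))
    (hinj : ∀ a b, a < b → b < m → T (n + a, 0) < T (n + b, 0)) (v : ℕ) (hv : 1 ≤ v) :
    contentOf (SBF (fun i => if i < m then 1 else 0) k n) T v =
      contC n k U ((range m).image fun a => n + 1 - T (n + a, 0)) v := by
  have hfound : ∀ a, a < m → (n + a, 0) ∈ SBF (fun i => if i < m then 1 else 0) k n := by
    intro a ha
    rw [mem_col hk]; omega
  have hstair : ∀ i j, j < n - i →
      (n - 1 - i, n + k - 1 - j) ∈ SBF (fun i => if i < m then 1 else 0) k n := by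
    intro i j hj
    rw [mem_col hk]; omega
  have hset : {p ∈ SBF (fun i => if i < m then 1 else 0) k n | T p = v} =
      {p | p ∈ SBF (fun i => if i < m then 1 else 0) k n ∧ p.1 < n ∧ T p = v} ∪
      {p | p ∈ SBF (fun i => if i < m then 1 else 0) k n ∧ n ≤ p.1 ∧ T p = v} := by
    ext p
    simp only [Set.mem_union, Set.mem_ofPred_eq]
    have := lt_or_ge p.1 n
    tauto
  have hfin := finite_col (n := n) (m := m) hk
  rw [contentOf, hset, Set.ncard_union_eq ?_ (hfin.subset fun p hp => hp.1)
    (hfin.subset fun p hp => hp.1)]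
  swap
  · rw [Set.disjoint_left]
    rintro p ⟨-, h1, -⟩ ⟨-, h2, -⟩
    omega
  rw [contC, Finsupp.add_apply, Finsupp.add_apply, Finsupp.single_eq_of_ne (by omega), add_zero]
  congr 1
  · rw [sum_single_apply (lam := fun i => n - i) (fun i j => n + 1 - U i j)
      (fun i hi => by omega) v]
    refine Set.ncard_congr (fun p _ => (n - 1 - p.1, n + k - 1 - p.2)) ?_ ?_ ?_
    · rintro ⟨r, c⟩ ⟨hp, h1, h2⟩
      have hb := hle _ hp
      rw [mem_col hk] at hp
      dsimp only at h1
      have h3 : n + k - 1 - c < n - (n - 1 - r) := by omega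
      refine ⟨h3, ?_⟩
      dsimp only
      rw [hTU _ _ h3, show n - 1 - (n - 1 - r) = r by omega,
        show n + k - 1 - (n + k - 1 - c) = c by omega]
      omega
    · rintro ⟨r, c⟩ ⟨r', c'⟩ ⟨hp, h1, -⟩ ⟨hp', h1', -⟩ h
      rw [mem_col hk] at hp hp'
      obtain ⟨h3, h4⟩ := Prod.mk.inj h
      dsimp only at h1 h1' h3 h4
      rw [Prod.mk.injEq]
      omega
    · rintro ⟨i, j⟩ ⟨h1, h2⟩
      dsimp only at h1 h2
      have hb := hle _ (hstair i j h1)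
      rw [hTU i j h1] at h2
      refine ⟨(n - 1 - i, n + k - 1 - j), ⟨hstair i j h1, ?_, ?_⟩, ?_⟩
      · dsimp only; omega
      · omega
      · rw [Prod.mk.injEq]; dsimp only; omega
  · rw [sum_image, Finsupp.finsetSum_apply]
    · have : {p | p ∈ SBF (fun i => if i < m then 1 else 0) k n ∧ n ≤ p.1 ∧ T p = v} =
          (((range m).filter fun a => T (n + a, 0) = v).map
            ⟨fun a => (n + a, 0), fun a b h => by have := (Prod.mk.inj h).1; omega⟩ :
              Finset (ℕ × ℕ)) := by
        ext ⟨r, c⟩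
        simp only [Set.mem_ofPred_eq, coe_map, Set.mem_image, mem_coe, mem_filter, mem_range]
        constructor
        · rintro ⟨hp, h1, h2⟩
          rw [mem_col hk] at hp
          obtain ⟨a, rfl⟩ := Nat.exists_eq_add_of_le h1
          obtain rfl : c = 0 := by omega
          exact ⟨a, ⟨by omega, h2⟩, rfl⟩
        · rintro ⟨a, ⟨h1, h2⟩, h⟩
          obtain ⟨rfl, rfl⟩ := Prod.mk.inj h
          exact ⟨hfound a h1, by omega, h2⟩
      rw [this, Set.ncard_coe_finset, card_map, card_filter]
      refine sum_congr rfl fun a ha => ?_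
      have hb := hle _ (hfound a (mem_range.1 ha))
      rw [Finsupp.single_apply, show n + 1 - (n + 1 - T (n + a, 0)) = T (n + a, 0) by omega]
    · intro a ha b hb hab
      simp only [coe_range, Set.mem_Iio] at ha hb
      have h1 := hle _ (hfound a ha)
      have h2 := hle _ (hfound b hb)
      dsimp only at hab
      rcases lt_trichotomy a b with h | h | h
      · have := hinj a b h hb; omega
      · exact h
      · have := hinj b a h ha; omega

/-- Pairs `(U, A)` of a staircase tableau with letters `0, …, n` and a set `A` of letters smaller than
`U 0 (n+k-1)`. For `k = 0` this is the last entry of row `0`; for `k = 1` it is the value `n + 1` taken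
outside the shape, so that `A` is then an arbitrary set of letters. -/
noncomputable def pairs (n k : ℕ) : Finset (Σ _ : ℕ → ℕ → ℕ, Finset ℕ) :=
  (tabs (n + 1) fun i => n - i).sigma fun U => (range (U 0 (n + k - 1))).powerset

/-- The exponent of the variable of index `0` fixes the size of `A`. -/
theorem mem_pairs_filter {n k m : ℕ} (hn : 1 ≤ n) (hk : k ≤ 1) (hmn : m ≤ k + n) {alpha : ℕ → ℕ}
    (ha : ∀ v, n + 1 < v → alpha v = 0) (U : ℕ → ℕ → ℕ) (A : Finset ℕ) :
    (⟨U, A⟩ : Σ _ : ℕ → ℕ → ℕ, Finset ℕ) ∈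
      ({a ∈ pairs n k | contC n k a.1 a.2 = expo n (n + k - m) alpha} : Finset _) ↔
      IsTab (n + 1) (fun i => n - i) U ∧ (∀ a ∈ A, a < U 0 (n + k - 1)) ∧ #A = m ∧
        ∀ v, 1 ≤ v → contC n k U A v = alpha v := by
  rw [mem_filter, pairs, mem_sigma, mem_tabs (fun i => by omega) (by simp), mem_powerset,
    eq_expo_iff ha, and_assoc]
  refine and_congr_right fun hU => ?_
  change IsTab (n + 1) (fun i => n - i) U at hU
  dsimp only
  rw [show A ⊆ range (U 0 (n + k - 1)) ↔ ∀ a ∈ A, a < U 0 (n + k - 1) from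
    ⟨fun h a ha => mem_range.1 (h ha), fun h a ha => mem_range.2 (h a ha)⟩]
  refine and_congr_right fun hA => ?_
  have hU1 := hU.2.2.1 0 (n + k - 1)
  have hU2 : U 0 (n + k - 1) < n + 1 ↔ n + k - 1 < n - 0 := hU.2.2.2 0 (n + k - 1)
  have hcard : #A ≤ U 0 (n + k - 1) := by
    have := card_le_card (show A ⊆ range (U 0 (n + k - 1)) from fun a ha => mem_range.2 (hA a ha))
    rwa [card_range] at this
  rw [contC_zero hU fun a ha => (hA a ha).trans_le hU1]
  refine and_congr_left fun _ => ?_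
  have : k = 0 ∨ k = 1 := by omega
  rcases this with rfl | rfl
  · have := hU2.2 (by omega)
    omega
  · omega

/-- Rotating by 180° and reversing the order of the letters, tableaux of the staircase with foundation
column `(1^m)` correspond to pairs `(U, A)` with `#A = m`. For `k = 0` the column lies below the cell
`(n - 1, 0)`, which is the source of the bound on the elements of `A`. -/
theorem col_count {n k m : ℕ} (hn : 1 ≤ n) (hk : k ≤ 1) (hm : 1 ≤ m) (hmn : m ≤ k + n)
    {alpha : ℕ → ℕ} (ha : ∀ v, n + 1 < v → alpha v = 0) :
    SSYTcount (SBF (fun i => if i < m then 1 else 0) k n) alpha =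
      #{a ∈ pairs n k | contC n k a.1 a.2 = expo n (n + k - m) alpha} := by
  rw [SSYTcount, ← Set.ncard_coe_finset]
  have hfound : ∀ a, a < m → (n + a, 0) ∈ SBF (fun i => if i < m then 1 else 0) k n := by
    intro a ha
    rw [mem_col hk]; omega
  have hstair : ∀ i j, j < n - i →
      (n - 1 - i, n + k - 1 - j) ∈ SBF (fun i => if i < m then 1 else 0) k n := by
    intro i j hj
    rw [mem_col hk]; omega
  refine Set.ncard_congr (fun T _ => (⟨fun i j => if j < n - i then
    n + 1 - T (n - 1 - i, n + k - 1 - j) else n + 1,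
    (range m).image fun a => n + 1 - T (n + a, 0)⟩ : Σ _ : ℕ → ℕ → ℕ, Finset ℕ)) ?_ ?_ ?_
  · rintro T ⟨⟨hpos, hout, hrow, hcol⟩, hcont⟩
    have hle : ∀ p ∈ SBF (fun i => if i < m then 1 else 0) k n, 0 < T p ∧ T p ≤ n + 1 :=
      fun p hp => ⟨hpos p hp, entry_le (finite_col hk) ha hcont hp⟩
    have hinc : ∀ a b, a < b → b < m → T (n + a, 0) < T (n + b, 0) := fun a b hab hb =>
      hcol _ _ _ (by omega) (hfound a (by omega)) (hfound b hb)
    rw [mem_coe, mem_pairs_filter hn hk hmn ha]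
    refine ⟨⟨?_, ?_, ?_, ?_⟩, ?_, ?_, ?_⟩
    · intro i j
      dsimp only
      by_cases h1 : j + 1 < n - i
      · rw [if_pos h1, if_pos (by omega)]
        have := hrow _ _ _ (by omega) (hstair i (j + 1) h1) (hstair i j (by omega))
        omega
      · rw [if_neg h1]
        split_ifs <;> omega
    · intro i j
      dsimp only
      by_cases h1 : j < n - i
      · rw [if_pos h1]
        intro _
        have b1 := hle _ (hstair i j h1)
        by_cases h2 : j < n - (i + 1)
        · rw [if_pos h2]
          have := hcol _ _ _ (by omega) (hstair (i + 1) j h2) (hstair i j h1)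
          omega
        · rw [if_neg h2]
          omega
      · rw [if_neg h1]; omega
    · intro i j
      dsimp only
      split_ifs <;> omega
    · intro i j
      dsimp only
      by_cases h1 : j < n - i
      · have b1 := hle _ (hstair i j h1)
        rw [if_pos h1]; omega
      · rw [if_neg h1]; omega
    · intro a ha
      obtain ⟨b, hb, rfl⟩ := mem_image.1 ha
      rw [mem_range] at hb
      have b1 := hle _ (hfound b hb)
      by_cases h1 : n + k - 1 < n - 0
      · rw [if_pos h1]
        have b2 := hstair _ _ h1
        have : n + k - 1 - (n + k - 1) = 0 := by omega
        rw [this] at b2 ⊢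
        have b3 := hle _ b2
        have := hcol _ _ _ (by omega) b2 (hfound b hb)
        omega
      · rw [if_neg h1]; omega
    · rw [card_image_of_injOn, card_range]
      intro a ha b hb hab
      simp only [coe_range, Set.mem_Iio] at ha hb
      have h1 := hle _ (hfound a ha)
      have h2 := hle _ (hfound b hb)
      dsimp only at hab
      rcases lt_trichotomy a b with h | h | h
      · have := hinc a b h hb; omega
      · exact h
      · have := hinc b a h ha; omega
    · intro v hv
      rw [← col_content hk hle _ hinc v hv, hcont v hv]
      intro i j h
      rw [if_pos h]
  · rintro T T' ⟨⟨hpos, hout, hrow, hcol⟩, hcont⟩ ⟨⟨hpos', hout', hrow', hcol'⟩, hcont'⟩ h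
    have hle := fun p => entry_le (finite_col hk) ha hcont (p := p)
    have hle' := fun p => entry_le (finite_col hk) ha hcont' (p := p)
    rw [Sigma.mk.inj_iff] at h
    obtain ⟨hU, hA⟩ := h
    rw [heq_eq_eq] at hA
    have himg : (range m).image (fun a => T (n + a, 0)) =
        (range m).image (fun a => T' (n + a, 0)) := by
      have := congrArg (image fun b => n + 1 - b) hA
      rw [image_image, image_image] at this
      refine Eq.trans (Eq.symm (image_congr fun a ha => ?_))
        (this.trans (image_congr fun a ha => ?_))
      · have := hle _ (hfound a (by simpa using ha))
        simp only [Function.comp]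
        omega
      · have := hle' _ (hfound a (by simpa using ha))
        simp only [Function.comp]
        omega
    funext ⟨r, c⟩
    by_cases hp : (r, c) ∈ SBF (fun i => if i < m then 1 else 0) k n
    · rcases (mem_col hk).1 hp with h1 | ⟨h1, h2, rfl⟩
      · have := congrFun (congrFun hU (n - 1 - r)) (n + k - 1 - c)
        rw [if_pos (by omega), if_pos (by omega), show n - 1 - (n - 1 - r) = r by omega,
          show n + k - 1 - (n + k - 1 - c) = c by omega] at this
        have := hle _ hp
        have := hle' _ hp
        omega
      · have := enum_unique (m := m) (f := fun a => T (n + a, 0)) (g := fun a => T' (n + a, 0))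
          (fun a b hab hb => hcol _ _ _ (by omega) (hfound a (by omega)) (hfound b hb))
          (fun a b hab hb => hcol' _ _ _ (by omega) (hfound a (by omega)) (hfound b hb))
          himg (a := r - n) (by omega)
        rwa [show n + (r - n) = r by omega] at this
    · rw [hout _ hp, hout' _ hp]
  · rintro ⟨U, A⟩ hUA
    rw [mem_coe, mem_pairs_filter hn hk hmn ha] at hUA
    obtain ⟨hU, hA, hcard, hcv⟩ := hUA
    have hcap := hU.2.2.1 0 (n + k - 1)
    have hB : #(A.image fun a => n + 1 - a) = m := by
      rw [card_image_of_injOn, hcard]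
      intro a ha b hb hab
      have := hA a ha
      have := hA b hb
      dsimp only at hab
      omega
    obtain ⟨f, hf, hfB⟩ := exists_enum _ hB
    have hfA : ∀ b, b < m → ∃ a ∈ A, f b = n + 1 - a := by
      intro b hb
      have := hfB ▸ mem_image_of_mem f (mem_range.2 hb)
      obtain ⟨a, ha, h⟩ := mem_image.1 this
      exact ⟨a, ha, h.symm⟩
    classical
    set T : ℕ × ℕ → ℕ := fun p => if p ∈ SBF (fun i => if i < m then 1 else 0) k n then
      (if p.1 < n then n + 1 - U (n - 1 - p.1) (n + k - 1 - p.2) else f (p.1 - n)) else 0 with hT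
    have hTs : ∀ r c, r < n → (r, c) ∈ SBF (fun i => if i < m then 1 else 0) k n →
        T (r, c) = n + 1 - U (n - 1 - r) (n + k - 1 - c) ∧
          U (n - 1 - r) (n + k - 1 - c) < n + 1 := by
      intro r c hr hp
      have := hU.2.2.2 (n - 1 - r) (n + k - 1 - c)
      refine ⟨?_, ?_⟩
      · simp only [hT]
        rw [if_pos hp, if_pos hr]
      · rw [this]
        rw [mem_col hk] at hp
        dsimp only
        omega
    have hTf : ∀ b, b < m → T (n + b, 0) = f b := by
      intro b hb
      simp only [hT]
      rw [if_pos (hfound b hb), if_neg (by omega), Nat.add_sub_cancel_left]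
    have hinc : ∀ a b, a < b → b < m → T (n + a, 0) < T (n + b, 0) := fun a b hab hb => by
      rw [hTf a (by omega), hTf b hb]
      exact hf a b hab hb
    have hpos : ∀ p ∈ SBF (fun i => if i < m then 1 else 0) k n, 0 < T p ∧ T p ≤ n + 1 := by
      rintro ⟨r, c⟩ hp
      rcases (mem_col hk).1 hp with h1 | ⟨h1, h2, rfl⟩
      · have := hTs r c h1.1 hp
        omega
      · obtain ⟨b, rfl⟩ := Nat.exists_eq_add_of_le h1
        obtain ⟨a, ha, h⟩ := hfA b (by omega)
        rw [hTf b (by omega), h]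
        have := hA a ha
        omega
    have himg : ((range m).image fun a => n + 1 - T (n + a, 0)) = A := by
      rw [image_congr (g := (fun b => n + 1 - b) ∘ f), ← image_image, hfB, image_image,
        image_congr (g := id), image_id]
      · intro a ha
        have := hA a ha
        simp only [Function.comp, id]
        omega
      · intro a ha
        simp only [Function.comp]
        rw [hTf a (by simpa using ha)]
    have hUT : ∀ i j, j < n - i → U i j = n + 1 - T (n - 1 - i, n + k - 1 - j) := by
      intro i j h
      obtain ⟨h1, h2⟩ := hTs _ _ (by omega) (hstair i j h)
      rw [show n - 1 - (n - 1 - i) = i by omega,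
        show n + k - 1 - (n + k - 1 - j) = j by omega] at h1 h2
      omega
    refine ⟨T, ⟨⟨fun p hp => (hpos p hp).1, fun p hp => if_neg hp, ?_, ?_⟩, ?_⟩, ?_⟩
    · intro r c1 c2 hc hp1 hp2
      by_cases hr : r < n
      · have h1 := hTs _ _ hr hp1
        have h2 := hTs _ _ hr hp2
        have := hU.mono (n - 1 - r) (show n + k - 1 - c2 ≤ n + k - 1 - c1 by omega)
        omega
      · have h1 := (mem_col hk).1 hp1
        have h2 := (mem_col hk).1 hp2
        obtain rfl : c1 = c2 := by omega
        exact le_rfl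
    · intro r1 r2 c hlt hp1 hp2
      by_cases hr : r2 < n
      · have h1 := hTs _ _ (by omega) hp1
        have h2 := hTs _ _ hr hp2
        have := hU.col_lt (show n - 1 - r2 < n - 1 - r1 by omega) h1.2 (fun i => by omega)
        omega
      · have h2 := (mem_col hk).1 hp2
        obtain rfl : c = 0 := by omega
        obtain ⟨b, rfl⟩ := Nat.exists_eq_add_of_le (not_lt.1 hr)
        by_cases hr1 : r1 < n
        · have h1 := hTs _ _ hr1 hp1
          have h3 := (mem_col hk).1 hp1
          obtain ⟨a, ha, h⟩ := hfA b (by omega)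
          rw [hTf b (by omega), h, h1.1]
          have h4 := hA a ha
          have e1 : n - 1 - r1 = 0 := by omega
          rw [e1, Nat.sub_zero] at h1 ⊢
          omega
        · obtain ⟨a, rfl⟩ := Nat.exists_eq_add_of_le (not_lt.1 hr1)
          exact hinc a b (by omega) (by omega)
    · intro v hv
      rw [col_content hk hpos hUT hinc v hv, himg, hcv v hv]
    · refine Sigma.ext ?_ (heq_of_eq himg)
      funext i j
      change (if j < n - i then n + 1 - T (n - 1 - i, n + k - 1 - j) else n + 1) = U i j
      split_ifs with h
      · exact (hUT i j h).symm
      · have : U i j < n + 1 ↔ j < n - i := hU.2.2.2 i j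
        have := hU.2.2.1 i j
        omega

/-! ### Comparison of coefficients -/

open MvPolynomial

theorem idx_succ (n u : ℕ) : idx n (u + 1) = n + 1 - u := by
  rw [idx, if_neg (by omega)]; omega

theorem monomial_contR (n k : ℕ) (U : ℕ → ℕ → ℕ) :
    wt (fun u => (X (idx n u) : MvPolynomial ℕ ℤ)) (n + 2) (rowShape n k) U =
      monomial (contR n k U) 1 := by
  simp only [wt, contR, monomial_sum_one, X]

/-- Expanding the product in `row_eq_column` over subsets `A` turns each summand into a sum of
monomials indexed by pairs. -/
theorem monomial_contC {n k : ℕ} (hn : 1 ≤ n) (hk : k ≤ 1) {U : ℕ → ℕ → ℕ}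
    (hU : IsTab (n + 1) (fun i => n - i) U) :
    wt (fun u => (X (idx n (u + 1)) : MvPolynomial ℕ ℤ)) (n + 1) (fun i => n - i) U *
      (X (idx n 0) ^ (n + k - U 0 (n + k - 1)) *
        ∏ i ∈ range (U 0 (n + k - 1)), (X (idx n 0) + X (idx n (i + 1)))) =
      ∑ A ∈ (range (U 0 (n + k - 1))).powerset, monomial (contC n k U A) 1 := by
  have hp : U 0 (n + k - 1) ≤ n + k := by
    have h1 := hU.2.2.1 0 (n + k - 1)
    have h2 : U 0 (n + k - 1) < n + 1 ↔ n + k - 1 < n - 0 := hU.2.2.2 0 (n + k - 1)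
    omega
  simp_rw [add_comm (X (idx n 0) : MvPolynomial ℕ ℤ)]
  rw [prod_add, mul_sum, mul_sum]
  refine sum_congr rfl fun A hA => ?_
  rw [mem_powerset] at hA
  have hc := card_le_card hA
  rw [card_range] at hc
  have h0 : idx n 0 = 0 := rfl
  have h1 : ∀ a b c : MvPolynomial ℕ ℤ, a * (b * c) = a * c * b := fun a b c => by ring
  have h2 : (X 0 : MvPolynomial ℕ ℤ) ^ (n + k - U 0 (n + k - 1)) *
      ((∏ a ∈ A, X (idx n (a + 1))) * ∏ _a ∈ range (U 0 (n + k - 1)) \ A, X 0) =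
      (∏ a ∈ A, X (idx n (a + 1))) * X 0 ^ (n + k - #A) := by
    rw [prod_const, card_sdiff_of_subset hA, card_range, mul_left_comm, ← pow_add]
    congr 2
    omega
  rw [h0, h2, ← mul_assoc, contC, ← mul_one (1 : ℤ), ← monomial_mul, ← mul_one (1 : ℤ),
    ← monomial_mul]
  simp only [mul_one, wt, monomial_sum_one, X, idx_succ, monomial_pow, one_pow,
    Finsupp.smul_single, smul_eq_mul]

/-- The coefficients of a monomial on the two sides of `row_eq_column`, with the `y u` taken to be
distinct indeterminates. -/
theorem counts_eq {n k : ℕ} (hn : 1 ≤ n) (hk : k ≤ 1) (d : ℕ →₀ ℕ) :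
    #{U ∈ tabs (n + 2) (rowShape n k) | contR n k U = d} =
      #{a ∈ pairs n k | contC n k a.1 a.2 = d} := by
  have h := row_eq_column (R := MvPolynomial ℕ ℤ) (n := n) (k := k)
    (y := fun u => X (idx n u)) hn hk ?_ ?_
  · simp only [schur, monomial_contR] at h
    rw [sum_congr rfl fun U hU => monomial_contC hn hk
      ((mem_tabs (fun i => by omega) (by simp)).1 hU), sum_sigma'] at h
    have h' := congrArg (coeff d) h
    simp only [coeff_sum, coeff_monomial, sum_boole] at h'
    exact_mod_cast h'
  · intro i j hi hj hij
    have := X_injective hij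
    unfold idx at this
    split_ifs at this <;> omega
  · intro i hi h0
    have := congrArg (eval fun _ => 1) h0
    simp at this

end StaircaseFoundation

/-- Let `n ≥ 1`, `0 ≤ k ≤ 1`, and let `λ = (m)` be a
partition with a single part, `m ≤ k + n`.  Then `s_{𝒮(λᵗ,k,n)}` and
`s_{𝒮(λ,k,n)}` are equal upon restricting to `n+1` variables: for every
content `α` supported on `{1,…,n+1}` (these index the monomials of the two
skew Schur polynomials in `n+1` variables) the monomial coefficients agree. -/
theorem singleRow_transpose_eq_in_nPlusOne_variables
    (n k m : ℕ) (hn : 1 ≤ n) (hk : k ≤ 1) (hm : 1 ≤ m) (hmn : m ≤ k + n) :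
    ∀ alpha : ℕ → ℕ, (∀ v, n + 1 < v → alpha v = 0) →
      SSYTcount (SBF (fun i => if i < m then 1 else 0) k n) alpha =
      SSYTcount (SBF (fun i => if i = 0 then m else 0) k n) alpha := by
  intro alpha ha
  rw [StaircaseFoundation.col_count hn hk hm hmn ha, StaircaseFoundation.row_count hk hmn ha,
    StaircaseFoundation.counts_eq hn hk]
end
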